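/- Let π be a unitary representation of BS(1,N) that admits a wavelet. Then π is weakly equivalent to the right regular representation of BS(1,N); in particular π extends to a faithful representation of the reduced C*-algebra C*_r(BS(1,N)). Moreover, every element of the C*-algebra generated by π(BS(1,N)) has connected spectrum. -/

import Mathlib

noncomputable section

open MeasureTheory Real Complex Filter Finset
open scoped ENNReal

/-! ### Basic instances for the circle -/

instance : MeasurableSpace Circle := borel Circle
instance : BorelSpace Circle := ⟨rfl⟩

/-- The point `e^{-2πit}` of the unit circle. -/
def ee (t : ℝ) : Circle := Circle.exp (-(2 * π * t))

/-- Normalized Lebesgue measure on the circle, realized as the image of Lebesgue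
measure on `[0,1)` under `t ↦ e^{-2πit}`. -/
def circleMeasure : Measure Circle := (volume.restrict (Set.Ico (0:ℝ) 1)).map ee

/-! ### The Baumslag–Solitar group `BS(1,N)` -/

/-- The single relation `u t u⁻¹ (t^N)⁻¹` defining `BS(1,N)`. -/
def BSRel (N : ℕ) : Set (FreeGroup Bool) :=
  {FreeGroup.of true * FreeGroup.of false * (FreeGroup.of true)⁻¹ * ((FreeGroup.of false) ^ N)⁻¹}

/-- The Baumslag–Solitar group `BS(1,N) = ⟨u,t | u t u⁻¹ = t^N⟩`. -/
abbrev BS (N : ℕ) := PresentedGroup (BSRel N)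

/-- The generator `u` of `BS(1,N)`. -/
def BS.u (N : ℕ) : BS N := PresentedGroup.of true

/-- The generator `t` of `BS(1,N)`. -/
def BS.t (N : ℕ) : BS N := PresentedGroup.of false

/-! ### The solenoid -/

/-- The `N`-solenoid, as a subgroup of the product of circles indexed by `ℤ`:
all sequences `(z_n)` with `z_{n+1}^N = z_n`. -/
def solenoidGroup (N : ℕ) : Subgroup (ℤ → Circle) where
  carrier := {z | ∀ n : ℤ, z (n + 1) ^ N = z n}
  one_mem' := by intro n; simp
  mul_mem' := by
    intro a b ha hb n
    simp only [Set.mem_setOf_eq, Pi.mul_apply, mul_pow] at *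
    rw [ha n, hb n]
  inv_mem' := by
    intro a ha n
    simp only [Set.mem_setOf_eq, Pi.inv_apply, inv_pow] at *
    rw [ha n]

/-- The `N`-solenoid as a type. -/
abbrev Solenoid (N : ℕ) := ↥(solenoidGroup N)

/-- The shift `S` on the solenoid: `(S z)_n = z_{n-1}`. -/
def shift (N : ℕ) (z : Solenoid N) : Solenoid N :=
  ⟨fun n => z.val (n - 1), by
    intro n
    have h := z.property (n - 1)
    simpa using h⟩

/-- The inverse `S⁻¹` of the shift on the solenoid: `(S⁻¹ z)_n = z_{n+1}`. -/
def shiftInv (N : ℕ) (z : Solenoid N) : Solenoid N :=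
  ⟨fun n => z.val (n + 1), fun n => z.property (n + 1)⟩

/-- Integer powers `Sⁿ` of the shift. -/
def shiftZ (N : ℕ) (n : ℤ) : Solenoid N → Solenoid N :=
  if 0 ≤ n then (shift N)^[n.toNat] else (shiftInv N)^[(-n).toNat]

/-- The measure `ν ∘ S`, defined by `(ν ∘ S)(E) = ν(S(E))`. -/
def measShift (N : ℕ) (ν : Measure (Solenoid N)) : Measure (Solenoid N) :=
  ν.map (shiftInv N)

/-- `ν` is quasi-invariant for the shift `S`: `ν ∘ S` and `ν` are mutually
absolutely continuous. -/
def QuasiInvariant (N : ℕ) (ν : Measure (Solenoid N)) : Prop :=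
  measShift N ν ≪ ν ∧ ν ≪ measShift N ν

/-- The shift `S` is ergodic with respect to `ν`. -/
def ShiftErgodic (N : ℕ) (ν : Measure (Solenoid N)) : Prop :=
  ∀ E : Set (Solenoid N), MeasurableSet E → shift N ⁻¹' E = E → ν E = 0 ∨ ν Eᶜ = 0

/-- A bounded measurable (`L^∞`-type) function. -/
def BddMeasurable {α : Type*} [MeasurableSpace α] (f : α → ℂ) : Prop :=
  Measurable f ∧ ∃ C : ℝ, ∀ x, ‖f x‖ ≤ C

/-! ### The representation `π_{ν,θ}` -/

/-- The pair of unitaries `U, T` on `L²(ν)` given by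
`Uξ = √Δ ⬝ θ ⬝ (ξ∘S)` (with `Δ = d(ν∘S)/dν`) and `(Tξ)(z) = z₀ ξ(z)`. -/
def IsPiNuTheta (N : ℕ) (ν : Measure (Solenoid N)) (θ : Solenoid N → Circle)
    (U T : unitary (Lp ℂ 2 ν →L[ℂ] Lp ℂ 2 ν)) : Prop :=
  (∀ ξ : Lp ℂ 2 ν,
      (((U : Lp ℂ 2 ν →L[ℂ] Lp ℂ 2 ν) ξ : Lp ℂ 2 ν) : Solenoid N → ℂ) =ᵐ[ν]
        fun z => (Real.sqrt (((measShift N ν).rnDeriv ν z).toReal) : ℂ) * (θ z : ℂ) *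
          (ξ : Solenoid N → ℂ) (shift N z)) ∧
  (∀ ξ : Lp ℂ 2 ν,
      (((T : Lp ℂ 2 ν →L[ℂ] Lp ℂ 2 ν) ξ : Lp ℂ 2 ν) : Solenoid N → ℂ) =ᵐ[ν]
        fun z => ((z.val 0 : Circle) : ℂ) * (ξ : Solenoid N → ℂ) z)

/-- `φ` is a cyclic vector for the (unitary) representation generated by `U` and `T`:
the only closed subspace containing `φ` and invariant under the group generated by
`U` and `T` is the whole space. -/
def cyclicVector {H : Type*} [NormedAddCommGroup H] [InnerProductSpace ℂ H]
    [CompleteSpace H] (U T : unitary (H →L[ℂ] H)) (φ : H) : Prop :=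
  ∀ K : Submodule ℂ H, IsClosed (K : Set H) → φ ∈ K →
    (∀ g ∈ Subgroup.closure ({U, T} : Set (unitary (H →L[ℂ] H))),
      ∀ v ∈ K, (g : H →L[ℂ] H) v ∈ K) → K = ⊤

/-! ### Filters and the Ruelle operator -/

/-- The quadrature mirror filter condition `R_{m₀} 1 = 1`, written out on `[0,1)`:
`(1/N) ∑_{k<N} |m₀(e^{-2πi(x+k)/N})|² = 1` for a.e. `x`. -/
def QMF (N : ℕ) (m₀ : Circle → ℂ) : Prop :=
  ∀ᵐ x ∂(volume.restrict (Set.Ico (0:ℝ) 1)),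
    (1 / N : ℝ) * ∑ k ∈ Finset.range N, ‖m₀ (ee ((x + k) / N))‖ ^ 2 = 1

/-- `h` is a fixed point of the Ruelle operator `R_{m₀}`:
`(1/N) ∑_{w^N = z} |m₀(w)|² h(w) = h(z)` for a.e. `z`, written out on `[0,1)`. -/
def RuelleFixed (N : ℕ) (m₀ : Circle → ℂ) (h : Circle → ℂ) : Prop :=
  ∀ᵐ x ∂(volume.restrict (Set.Ico (0:ℝ) 1)),
    (1 / N : ℂ) * ∑ k ∈ Finset.range N,
        (‖m₀ (ee ((x + k) / N))‖ ^ 2 : ℝ) * h (ee ((x + k) / N)) = h (ee x)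

/-- The wavelet representation of `BS(1,N)` associated to a filter `m₀`, realized
on `L²(m)` for a measure `m` on the solenoid: `Uξ = m₀ ⬝ (ξ∘S)` and `T` is
multiplication by the coordinate `z₀`. -/
def IsWaveletRepOn (N : ℕ) (m₀ : Circle → ℂ) (m : Measure (Solenoid N))
    (U T : unitary (Lp ℂ 2 m →L[ℂ] Lp ℂ 2 m)) : Prop :=
  (∀ ξ : Lp ℂ 2 m,
      (((U : Lp ℂ 2 m →L[ℂ] Lp ℂ 2 m) ξ : Lp ℂ 2 m) : Solenoid N → ℂ) =ᵐ[m]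
        fun z => m₀ (z.val 0) * (ξ : Solenoid N → ℂ) (shift N z)) ∧
  (∀ ξ : Lp ℂ 2 m,
      (((T : Lp ℂ 2 m →L[ℂ] Lp ℂ 2 m) ξ : Lp ℂ 2 m) : Solenoid N → ℂ) =ᵐ[m]
        fun z => ((z.val 0 : Circle) : ℂ) * (ξ : Solenoid N → ℂ) z)

/-- The measure `m` on the solenoid associated to a weight `W` (with `N W = |m₀|²`):
its `z₀`-marginal is normalized Lebesgue measure on the circle, and
`d(m∘S)/dm = N W`. -/
def IsAssociatedMeasure (N : ℕ) (W : Circle → ℝ) (m : Measure (Solenoid N)) : Prop :=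
  IsProbabilityMeasure m ∧
  m.map (fun z : Solenoid N => z.val 0) = circleMeasure ∧
  measShift N m = m.withDensity (fun z => ENNReal.ofReal (N * W (z.val 0)))

end

namespace BSProof

open MeasureTheory Topology Filter Set
open scoped Manifold ContDiff

section riesz

/-- Twice the `∂̄` operator. -/
noncomputable def dbar {V : Type*} [NormedAddCommGroup V] [NormedSpace ℂ V] (f : ℂ → V) (w : ℂ) : V :=
  fderiv ℝ f w 1 + Complex.I • fderiv ℝ f w Complex.I

variable {V : Type*} [NormedAddCommGroup V] [NormedSpace ℂ V]

lemma continuous_dbar {f : ℂ → V} (hf : ContDiff ℝ 1 f) : Continuous (dbar f) := by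
  have := hf.continuous_fderiv (by norm_num)
  unfold dbar
  fun_prop

lemma dbar_eq_zero_of_eventually_const {f : ℂ → V} {w : ℂ} {c : V} (h : ∀ᶠ x in 𝓝 w, f x = c) :
    dbar f w = 0 := by
  have : fderiv ℝ f w = 0 := by
    have h2 : f =ᶠ[𝓝 w] fun _ => c := h
    rw [h2.fderiv_eq]; simp
  simp [dbar, this]

lemma dbar_congr {f g : ℂ → V} {w : ℂ} (h : f =ᶠ[𝓝 w] g) : dbar f w = dbar g w := by
  simp [dbar, h.fderiv_eq]

lemma tsupport_dbar_subset (f : ℂ → V) : tsupport (dbar f) ⊆ tsupport f := by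
  apply closure_minimal _ (isClosed_tsupport f)
  intro w hw
  by_contra h
  exact hw (dbar_eq_zero_of_eventually_const (notMem_tsupport_iff_eventuallyEq.mp h))

lemma hasCompactSupport_dbar {f : ℂ → V} (hc : HasCompactSupport f) : HasCompactSupport (dbar f) :=
  hc.of_isClosed_subset (isClosed_tsupport _) (tsupport_dbar_subset f)

lemma integral_dbar_eq_zero {f : ℂ → V} (hf : ContDiff ℝ 1 f) (hc : HasCompactSupport f) :
    ∫ w, dbar f w = 0 := by
  have key : ∀ v : ℂ, ∫ w, fderiv ℝ f w v = 0 := by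
    intro v
    have hcf : HasCompactSupport (fun w => fderiv ℝ f w v) := by
      have := hc.fderiv ℝ
      exact this.comp_left (g := fun L : ℂ →L[ℝ] V => L v) (by simp)
    have hcont : Continuous (fun w => fderiv ℝ f w v) := by
      have := hf.continuous_fderiv (by norm_num)
      fun_prop
    have := integral_smul_fderiv_eq_neg_fderiv_smul_of_integrable (𝕜 := ℝ) (μ := (volume : Measure ℂ))
      (f := fun _ : ℂ => (1:ℝ)) (g := f) (v := v) (by simp)
      (by simpa using hcont.integrable_of_hasCompactSupport hcf)
      (by simpa using hf.continuous.integrable_of_hasCompactSupport hc)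
      (by intro x _; fun_prop) (by intro x _; exact (hf.differentiable (by norm_num)) x)
    simpa using this
  have hi : ∀ v : ℂ, Integrable (fun w => fderiv ℝ f w v) := by
    intro v
    have hcf : HasCompactSupport (fun w => fderiv ℝ f w v) := by
      have := hc.fderiv ℝ
      exact this.comp_left (g := fun L : ℂ →L[ℝ] V => L v) (by simp)
    have hcont : Continuous (fun w => fderiv ℝ f w v) := by
      have := hf.continuous_fderiv (by norm_num)
      fun_prop
    exact hcont.integrable_of_hasCompactSupport hcf
  unfold dbar
  have h2 : Integrable (fun w => Complex.I • fderiv ℝ f w Complex.I) := (hi Complex.I).smul Complex.I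
  rw [integral_add (hi 1) h2, integral_smul, key, key]; simp

lemma integral_dbar_smul_eq_zero [CompleteSpace V] {χ : ℂ → ℂ} (hχ : ContDiff ℝ 1 χ) (hc : HasCompactSupport χ)
    {R : ℂ → V} {Ω : Set ℂ} (hΩ : IsOpen Ω) (hR : DifferentiableOn ℂ R Ω) (hs : tsupport χ ⊆ Ω) :
    ∫ w, dbar χ w • R w = 0 := by
  have hts : tsupport (fun w => χ w • R w) ⊆ tsupport χ := tsupport_smul_subset_left χ R
  have hRc : ∀ w ∈ Ω, ContDiffAt ℝ 1 R w := fun w hw =>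
    ((hR.analyticAt (hΩ.mem_nhds hw)).contDiffAt (n := 1)).restrict_scalars ℝ
  have hcd : ContDiff ℝ 1 (fun w => χ w • R w) := by
    rw [contDiff_iff_contDiffAt]
    intro w
    by_cases hw : w ∈ tsupport (fun w => χ w • R w)
    swap
    · exact (contDiffAt_const (c := 0)).congr_of_eventuallyEq (notMem_tsupport_iff_eventuallyEq.mp hw)
    exact hχ.contDiffAt.smul (hRc w (hs (hts hw)))
  have h0 := integral_dbar_eq_zero hcd (hc.of_isClosed_subset (isClosed_tsupport _) hts)
  rw [← h0]
  congr 1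
  ext w
  by_cases hw : w ∈ tsupport χ
  · have hd : HasFDerivAt R ((fderiv ℂ R w).restrictScalars ℝ) w :=
      ((hR.differentiableAt (hΩ.mem_nhds (hs hw))).hasFDerivAt).restrictScalars ℝ
    have hdχ : HasFDerivAt χ (fderiv ℝ χ w) w := (hχ.differentiable (by norm_num) w).hasFDerivAt
    have := (hdχ.smul hd).fderiv
    simp only [dbar]
    change _ = fderiv ℝ (χ • R) w 1 + Complex.I • fderiv ℝ (χ • R) w Complex.I
    rw [this]
    have h1 : (fderiv ℂ R w) Complex.I = Complex.I • (fderiv ℂ R w) 1 := by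
      rw [← map_smul]; simp
    simp [h1, smul_smul, add_smul, mul_assoc]
    rw [show Complex.I * (χ w * Complex.I) = - χ w by ring_nf; simp]
    simp; abel
  · have h1 : dbar χ w = 0 := dbar_eq_zero_of_eventually_const (notMem_tsupport_iff_eventuallyEq.mp hw)
    have h2 : dbar (fun w => χ w • R w) w = 0 := dbar_eq_zero_of_eventually_const
      (notMem_tsupport_iff_eventuallyEq.mp (fun h => hw (hts h)))
    rw [h1, h2]; simp

lemma dbar_sub {f g : ℂ → V} (hf : ContDiff ℝ 1 f) (hg : ContDiff ℝ 1 g) (w : ℂ) :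
    dbar (fun x => f x - g x) w = dbar f w - dbar g w := by
  have := fderiv_fun_sub (hf.differentiable (by norm_num) w) (hg.differentiable (by norm_num) w)
  simp [dbar, this, smul_sub]; abel

/-- standard bump -/
noncomputable def bumpη (w : ℂ) : ℂ := ((Real.smoothTransition (2 - (w.re ^ 2 + w.im ^ 2)) : ℝ) : ℂ)

lemma bumpη_contDiff : ContDiff ℝ 1 bumpη := by
  unfold bumpη
  apply Complex.ofRealCLM.contDiff.comp
  apply Real.smoothTransition.contDiff.comp
  have h1 : ContDiff ℝ 1 Complex.re := Complex.reCLM.contDiff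
  have h2 : ContDiff ℝ 1 Complex.im := Complex.imCLM.contDiff
  fun_prop

lemma bumpη_compact : HasCompactSupport bumpη := by
  apply HasCompactSupport.intro (isCompact_closedBall (0:ℂ) 2)
  intro x hx
  unfold bumpη
  rw [Real.smoothTransition.zero_of_nonpos]; · simp
  simp at hx
  have : ‖x‖^2 = x.re^2+x.im^2 := by rw [Complex.sq_norm, Complex.normSq_apply]; ring
  nlinarith

lemma bumpη_one : ∀ᶠ w in 𝓝 (0:ℂ), bumpη w = 1 := by
  filter_upwards [Metric.ball_mem_nhds (0:ℂ) one_pos] with w hw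
  unfold bumpη
  rw [Real.smoothTransition.one_of_one_le]; · simp
  simp at hw
  have : ‖w‖^2 = w.re^2+w.im^2 := by rw [Complex.sq_norm, Complex.normSq_apply]; ring
  nlinarith [norm_nonneg w]

noncomputable def kappa : ℂ := ∫ w, dbar bumpη w * w⁻¹

lemma dbar_bumpη (w : ℂ) : dbar bumpη w =
    ((-2 * deriv Real.smoothTransition (2 - (w.re ^ 2 + w.im ^ 2)) : ℝ) : ℂ) * w := by
  have hd : HasDerivAt Real.smoothTransition (deriv Real.smoothTransition (2 - (w.re ^ 2 + w.im ^ 2)))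
      (2 - (w.re ^ 2 + w.im ^ 2)) := by
    apply DifferentiableAt.hasDerivAt
    exact (Real.smoothTransition.contDiff (n := 1)).differentiable (by norm_num) _
  set D := deriv Real.smoothTransition (2 - (w.re ^ 2 + w.im ^ 2))
  have hre : HasFDerivAt Complex.re Complex.reCLM w := Complex.reCLM.hasFDerivAt
  have him : HasFDerivAt Complex.im Complex.imCLM w := Complex.imCLM.hasFDerivAt
  have h1 := ((hre.pow 2).add (him.pow 2)).const_sub 2
  have h2 := hd.comp_hasFDerivAt w h1
  have h3 := (Complex.ofRealCLM.hasFDerivAt).comp w h2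
  have h4 : fderiv ℝ bumpη w = _ := h3.fderiv
  simp [dbar, h4]
  apply Complex.ext <;> simp <;> ring

lemma kappa_ne_zero : kappa ≠ 0 := by
  have h1 : ∀ w : ℂ, w ≠ 0 → dbar bumpη w * w⁻¹ =
    ((-2 * deriv Real.smoothTransition (2 - (w.re ^ 2 + w.im ^ 2)) : ℝ) : ℂ) := by
    intro w hw
    rw [dbar_bumpη]; field_simp
  have h2 : kappa = ((∫ w : ℂ, -2 * deriv Real.smoothTransition (2 - (w.re ^ 2 + w.im ^ 2)) : ℝ) : ℂ) := by
    unfold kappa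
    rw [← integral_complex_ofReal]
    apply integral_congr_ae
    have : ∀ᵐ w : ℂ, w ≠ 0 := by
      simp [ae_iff]
    filter_upwards [this] with w hw using h1 w hw
  have hcd : Continuous (deriv Real.smoothTransition) :=
    (Real.smoothTransition.contDiff (n := 1)).continuous_deriv (by norm_num)
  have hcont : Continuous (fun w : ℂ => 2 * deriv Real.smoothTransition (2 - (w.re ^ 2 + w.im ^ 2))) := by
    fun_prop
  have hcs : HasCompactSupport (fun w : ℂ => 2 * deriv Real.smoothTransition (2 - (w.re ^ 2 + w.im ^ 2))) := by
    apply HasCompactSupport.intro (isCompact_closedBall (0:ℂ) 2)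
    intro x hx
    have h0 : deriv Real.smoothTransition (2 - (x.re ^ 2 + x.im ^ 2)) = 0 := by
      have : Real.smoothTransition =ᶠ[𝓝 (2 - (x.re ^ 2 + x.im ^ 2))] fun _ => 0 := by
        have : (2 - (x.re ^ 2 + x.im ^ 2)) < 0 := by
          simp at hx
          have : ‖x‖^2 = x.re^2+x.im^2 := by rw [Complex.sq_norm, Complex.normSq_apply]; ring
          nlinarith
        filter_upwards [Iio_mem_nhds this] with y hy
        exact Real.smoothTransition.zero_of_nonpos (le_of_lt hy)
      rw [this.deriv_eq]; simp
    simp [h0]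
  have hnn : ∀ w : ℂ, 0 ≤ 2 * deriv Real.smoothTransition (2 - (w.re ^ 2 + w.im ^ 2)) := by
    intro w
    have := Real.smoothTransition.monotone.deriv_nonneg (x := 2 - (w.re ^ 2 + w.im ^ 2))
    linarith
  obtain ⟨c, hc, hc2⟩ := exists_deriv_eq_slope Real.smoothTransition (zero_lt_one)
    (Real.smoothTransition.continuous.continuousOn)
    ((Real.smoothTransition.contDiff (n := 1)).differentiable (by norm_num)).differentiableOn
  have hpos : 0 < ∫ w : ℂ, 2 * deriv Real.smoothTransition (2 - (w.re ^ 2 + w.im ^ 2)) := by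
    apply hcont.integral_pos_of_hasCompactSupport_nonneg_nonzero hcs hnn (x := ((Real.sqrt (2 - c) : ℝ) : ℂ))
    have : 2 - c ≥ 0 := by linarith [hc.2]
    simp [Real.sq_sqrt this, hc2]
  rw [h2]
  have : (∫ w : ℂ, -2 * deriv Real.smoothTransition (2 - (w.re ^ 2 + w.im ^ 2)))
    = - ∫ w : ℂ, 2 * deriv Real.smoothTransition (2 - (w.re ^ 2 + w.im ^ 2)) := by
    rw [← integral_neg]; congr 1; ext w; ring
  rw [this]
  norm_cast
  linarith

lemma integral_cauchy_zero {χ : ℂ → ℂ} (hχ : ContDiff ℝ 1 χ) (hc : HasCompactSupport χ) {z : ℂ}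
    (hz : z ∉ tsupport χ) : ∫ w, dbar χ w * (w - z)⁻¹ = 0 := by
  have := integral_dbar_smul_eq_zero hχ hc (R := fun w => (w - z)⁻¹) (Ω := {z}ᶜ) isOpen_compl_singleton
    (by
      intro w hw
      have : w - z ≠ 0 := sub_ne_zero.mpr hw
      exact ((differentiableAt_id.sub_const z).inv this).differentiableWithinAt)
    (by intro w hw h; simp at h; exact hz (h ▸ hw))
  simpa using this

lemma dbar_mul_integrable [CompleteSpace V] {χ : ℂ → ℂ} (hχ : ContDiff ℝ 1 χ) (hc : HasCompactSupport χ)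
    {R : ℂ → V} (hR : ∀ w ∈ tsupport (dbar χ), ContinuousAt R w) :
    Integrable (fun w => dbar χ w • R w) := by
  have hts : tsupport (fun w => dbar χ w • R w) ⊆ tsupport (dbar χ) := tsupport_smul_subset_left _ R
  apply Continuous.integrable_of_hasCompactSupport
  · apply continuous_of_tsupport
    intro w hw
    exact (continuous_dbar hχ).continuousAt.smul (hR w (hts hw))
  · exact (hasCompactSupport_dbar hc).of_isClosed_subset (isClosed_tsupport _) hts

lemma notMem_tsupport_dbar {χ : ℂ → ℂ} {z : ℂ} {c : ℂ} (h : ∀ᶠ w in 𝓝 z, χ w = c) :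
    z ∉ tsupport (dbar χ) := by
  rw [notMem_tsupport_iff_eventuallyEq]
  have := eventually_eventually_nhds.mpr h
  filter_upwards [this] with w hw
  exact dbar_eq_zero_of_eventually_const hw

lemma continuousAt_cauchy {χ : ℂ → ℂ} {z : ℂ} {c : ℂ} (h : ∀ᶠ w in 𝓝 z, χ w = c) :
    ∀ w ∈ tsupport (dbar χ), ContinuousAt (fun w => (w - z)⁻¹) w := by
  intro w hw
  have : w - z ≠ 0 := by
    intro h0
    exact notMem_tsupport_dbar h (sub_eq_zero.mp h0 ▸ hw)
  exact ContinuousAt.inv₀ (by fun_prop) this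

lemma integral_cauchy_one {χ : ℂ → ℂ} (hχ : ContDiff ℝ 1 χ) (hc : HasCompactSupport χ) {z : ℂ}
    (hz : ∀ᶠ w in 𝓝 z, χ w = 1) : ∫ w, dbar χ w * (w - z)⁻¹ = kappa := by
  have hη : ContDiff ℝ 1 (fun w => bumpη (w - z)) := bumpη_contDiff.comp (contDiff_id.sub contDiff_const)
  have hηc : HasCompactSupport (fun w => bumpη (w - z)) := by
    have := bumpη_compact.comp_homeomorph (Homeomorph.subRight z)
    exact this
  have hη1 : ∀ᶠ w in 𝓝 z, bumpη (w - z) = 1 := by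
    have : Tendsto (fun w : ℂ => w - z) (𝓝 z) (𝓝 0) := by
      have : ContinuousAt (fun w : ℂ => w - z) z := by fun_prop
      simpa [ContinuousAt] using this
    exact this.eventually bumpη_one
  have h0 := integral_cauchy_zero (χ := fun w => χ w - bumpη (w - z)) (hχ.sub hη)
    (hc.sub hηc) (z := z) (by
      rw [notMem_tsupport_iff_eventuallyEq]
      filter_upwards [hz, hη1] with w h1 h2
      simp [h1, h2])
  have hsub : ∀ w, dbar (fun w => χ w - bumpη (w - z)) w * (w - z)⁻¹
      = dbar χ w • (w - z)⁻¹ - dbar (fun w => bumpη (w - z)) w • (w - z)⁻¹ := by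
    intro w; rw [dbar_sub hχ hη]; simp [sub_mul]
  simp_rw [hsub] at h0
  rw [integral_sub (dbar_mul_integrable hχ hc (continuousAt_cauchy hz))
    (dbar_mul_integrable hη hηc (continuousAt_cauchy hη1)), sub_eq_zero] at h0
  simp only [smul_eq_mul] at h0
  rw [h0]
  have : ∀ w, dbar (fun w => bumpη (w - z)) w = dbar bumpη (w - z) := by
    intro w
    simp only [dbar]
    rw [fderiv_comp_sub]
  simp_rw [this]
  unfold kappa
  exact integral_sub_right_eq_self (fun w => dbar bumpη w * w⁻¹) z

lemma exists_cutoff {K U : Set ℂ} (hK : IsCompact K) (hU : IsOpen U) (hKU : K ⊆ U) :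
    ∃ χ : ℂ → ℂ, ContDiff ℝ 1 χ ∧ HasCompactSupport χ ∧ tsupport χ ⊆ U ∧ ∀ z ∈ K, ∀ᶠ w in 𝓝 z, χ w = 1 := by
  obtain ⟨r, hr⟩ := hK.isBounded.subset_ball 0
  obtain ⟨f, h0, h1, -⟩ := exists_contMDiffMap_zero_one_nhds_of_isClosed (n := 1) 𝓘(ℝ, ℂ)
    (s := (U ∩ Metric.ball 0 r)ᶜ) (t := K) (hU.inter Metric.isOpen_ball).isClosed_compl hK.isClosed
    (by
      rw [Set.disjoint_compl_left_iff_subset]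
      exact Set.subset_inter hKU hr)
  have hsub : tsupport (fun w => ((f w : ℝ) : ℂ)) ⊆ U ∩ Metric.ball 0 r := by
    intro w hw
    by_contra h
    have := h0
    rw [eventually_nhdsSet_iff_forall] at this
    refine (notMem_tsupport_iff_eventuallyEq.mpr ?_) hw
    filter_upwards [this w h] with x hx
    simp [hx]
  refine ⟨fun w => ((f w : ℝ) : ℂ), ?_, ?_, ?_, ?_⟩
  · exact Complex.ofRealCLM.contDiff.comp f.contMDiff.contDiff
  · exact (isCompact_closedBall (0:ℂ) r).of_isClosed_subset (isClosed_tsupport _)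
      (hsub.trans (Set.inter_subset_right.trans Metric.ball_subset_closedBall))
  · exact hsub.trans Set.inter_subset_left
  · rw [eventually_nhdsSet_iff_forall] at h1
    intro z hz
    filter_upwards [h1 z hz] with x hx
    simp [hx]

end riesz
end BSProof

namespace BSProof

open MeasureTheory Topology Filter Set

section riesz2

variable {A : Type*} [NormedRing A] [NormedAlgebra ℂ A] [CompleteSpace A]

lemma resolvent_mul_left {a : A} {w : ℂ} (hw : w ∉ spectrum ℂ a) :
    resolvent a w * (algebraMap ℂ A w - a) = 1 := by
  have : IsUnit (algebraMap ℂ A w - a) := spectrum.notMem_iff.mp hw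
  exact Ring.inverse_mul_cancel _ this

lemma resolvent_mul_right {a : A} {w : ℂ} (hw : w ∉ spectrum ℂ a) :
    (algebraMap ℂ A w - a) * resolvent a w = 1 := by
  have : IsUnit (algebraMap ℂ A w - a) := spectrum.notMem_iff.mp hw
  exact Ring.mul_inverse_cancel _ this

lemma resolvent_identity {a : A} {z w : ℂ} (hz : z ∉ spectrum ℂ a) (hw : w ∉ spectrum ℂ a) :
    resolvent a z - resolvent a w = (w - z) • (resolvent a z * resolvent a w) := by
  have h1 : resolvent a z = resolvent a z * ((algebraMap ℂ A w - a) * resolvent a w) := by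
    rw [resolvent_mul_right hw, mul_one]
  have h2 : resolvent a w = resolvent a z * (algebraMap ℂ A z - a) * resolvent a w := by
    rw [resolvent_mul_left hz, one_mul]
  calc resolvent a z - resolvent a w
      = resolvent a z * ((algebraMap ℂ A w - a) * resolvent a w)
        - resolvent a z * (algebraMap ℂ A z - a) * resolvent a w := by rw [← h1, ← h2]
    _ = resolvent a z * (algebraMap ℂ A (w - z)) * resolvent a w := by
        rw [map_sub]; noncomm_ring
    _ = _ := by
        rw [← Algebra.commutes, mul_assoc, Algebra.smul_def]

lemma resolvent_diff (a : A) : DifferentiableOn ℂ (resolvent a) (resolventSet ℂ a) := by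
  intro w hw
  exact (spectrum.hasDerivAt_resolvent_const_left hw).differentiableAt.differentiableWithinAt

lemma resolvent_contAt {a : A} {w : ℂ} (hw : w ∉ spectrum ℂ a) : ContinuousAt (resolvent a) w :=
  (spectrum.hasDerivAt_resolvent_const_left (by simpa [spectrum] using hw)).continuousAt

/-- Riesz integral, unnormalised. -/
noncomputable def rint (a : A) (χ : ℂ → ℂ) : A := ∫ w, dbar χ w • resolvent a w

variable {a : A} {χ : ℂ → ℂ}

lemma riesz_unit (hχ : ContDiff ℝ 1 χ) (hc : HasCompactSupport χ)
    (hs : ∀ w ∈ tsupport (dbar χ), w ∉ spectrum ℂ a) {l c d : ℂ}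
    (hl : ∀ᶠ w in 𝓝 l, χ w = c) (hd : ∫ w, dbar χ w * (w - l)⁻¹ = d) (hne : ∃ k : ℂ, k ≠ 0 ∧
      algebraMap ℂ A d - rint a χ = algebraMap ℂ A k) : l ∉ spectrum ℂ a := by
  obtain ⟨k, hk, hk2⟩ := hne
  have hR : ∀ w ∈ tsupport (dbar χ), ContinuousAt (fun w => (w - l)⁻¹ • resolvent a w) w := by
    intro w hw
    exact (continuousAt_cauchy hl w hw).smul (resolvent_contAt (hs w hw))
  set X : A := ∫ w, dbar χ w • ((w - l)⁻¹ • resolvent a w)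
  have hXi := dbar_mul_integrable hχ hc hR
  have i1 := dbar_mul_integrable hχ hc (R := resolvent a) (fun w hw => resolvent_contAt (hs w hw))
  have i2 := dbar_mul_integrable hχ hc (R := fun w => (w - l)⁻¹ • (1:A)) (fun w hw =>
    (continuousAt_cauchy hl w hw).smul continuousAt_const)
  have hd2 : ∫ w, dbar χ w • (w - l)⁻¹ • (1:A) = algebraMap ℂ A d := by
    simp_rw [smul_smul]
    rw [integral_smul_const, hd, Algebra.algebraMap_eq_smul_one]
  have hdec : ∀ w, w ∈ tsupport (dbar χ) → (algebraMap ℂ A l - a) = (algebraMap ℂ A w - a) - algebraMap ℂ A (w - l) := by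
    intro w _; rw [map_sub]; abel
  have key1 : (algebraMap ℂ A l - a) * X = algebraMap ℂ A k := by
    rw [← hk2, ← hd2, rint, ← integral_sub i2 i1, ← integral_const_mul_of_integrable hXi]
    congr 1; ext w
    by_cases hw : w ∈ tsupport (dbar χ)
    · have hwl : w - l ≠ 0 := by
        intro h0; exact notMem_tsupport_dbar hl (sub_eq_zero.mp h0 ▸ hw)
      rw [hdec w hw, mul_smul_comm, mul_smul_comm, sub_mul, resolvent_mul_right (hs w hw), ← smul_sub,
        ← Algebra.smul_def, smul_sub, smul_smul (w - l)⁻¹, inv_mul_cancel₀ hwl, one_smul]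
    · simp [image_eq_zero_of_notMem_tsupport hw]
  have key2 : X * (algebraMap ℂ A l - a) = algebraMap ℂ A k := by
    rw [← hk2, ← hd2, rint, ← integral_sub i2 i1, ← integral_mul_const_of_integrable hXi]
    congr 1; ext w
    by_cases hw : w ∈ tsupport (dbar χ)
    · have hwl : w - l ≠ 0 := by
        intro h0; exact notMem_tsupport_dbar hl (sub_eq_zero.mp h0 ▸ hw)
      rw [hdec w hw, smul_mul_assoc, smul_mul_assoc, mul_sub, resolvent_mul_left (hs w hw), ← smul_sub,
        ← Algebra.commutes, ← Algebra.smul_def, smul_sub, smul_smul (w - l)⁻¹, inv_mul_cancel₀ hwl, one_smul]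
    · simp [image_eq_zero_of_notMem_tsupport hw]
  rw [spectrum.notMem_iff]
  refine ⟨⟨algebraMap ℂ A l - a, k⁻¹ • X, ?_, ?_⟩, rfl⟩
  · rw [mul_smul_comm, key1, Algebra.algebraMap_eq_smul_one, smul_smul, inv_mul_cancel₀ hk, one_smul]
  · rw [smul_mul_assoc, key2, Algebra.algebraMap_eq_smul_one, smul_smul, inv_mul_cancel₀ hk, one_smul]

lemma riesz_mul {χ1 χ2 : ℂ → ℂ} (hχ1 : ContDiff ℝ 1 χ1) (hc1 : HasCompactSupport χ1)
    (hχ2 : ContDiff ℝ 1 χ2) (hc2 : HasCompactSupport χ2)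
    (hs1 : ∀ w ∈ tsupport (dbar χ1), w ∉ spectrum ℂ a)
    (hs2 : ∀ w ∈ tsupport (dbar χ2), w ∉ spectrum ℂ a)
    (h12 : ∀ z ∈ tsupport χ1, ∀ᶠ w in 𝓝 z, χ2 w = 1) :
    rint a χ1 * rint a χ2 = kappa • rint a χ1 := by
  have i1 := dbar_mul_integrable hχ1 hc1 (R := resolvent a) (fun w hw => resolvent_contAt (hs1 w hw))
  have i2 := dbar_mul_integrable hχ2 hc2 (R := resolvent a) (fun w hw => resolvent_contAt (hs2 w hw))
  have hdis : ∀ z ∈ tsupport χ1, z ∉ tsupport (dbar χ2) := fun z hz => notMem_tsupport_dbar (h12 z hz)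
  have hsub := tsupport_dbar_subset χ1
  set f : ℂ → ℂ → A := fun z w => (dbar χ1 z * dbar χ2 w * (w - z)⁻¹) • resolvent a w with hf
  have step : ∀ z, (dbar χ1 z • resolvent a z) * rint a χ2 =
      kappa • (dbar χ1 z • resolvent a z) - ∫ w, f z w := by
    intro z
    by_cases hz : z ∈ tsupport (dbar χ1)
    · have h1 := h12 z (hsub hz)
      have j1 := dbar_mul_integrable hχ2 hc2 (R := fun w => (w - z)⁻¹ • resolvent a z) (fun w hw =>
        (continuousAt_cauchy h1 w hw).smul continuousAt_const)
      have j2 := dbar_mul_integrable hχ2 hc2 (R := fun w => (w - z)⁻¹ • resolvent a w) (fun w hw =>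
        (continuousAt_cauchy h1 w hw).smul (resolvent_contAt (hs2 w hw)))
      have e1 : kappa • resolvent a z = ∫ w, dbar χ2 w • (w - z)⁻¹ • resolvent a z := by
        simp_rw [smul_smul]
        rw [integral_smul_const, integral_cauchy_one hχ2 hc2 h1]
      have e2 : ∫ w, f z w = dbar χ1 z • ∫ w, dbar χ2 w • (w - z)⁻¹ • resolvent a w := by
        rw [← integral_smul]
        congr 1; ext w; simp only [hf, smul_smul, mul_assoc]
      rw [e2, smul_comm kappa, e1, ← smul_sub, ← integral_sub j1 j2, smul_mul_assoc, rint,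
        ← integral_const_mul_of_integrable i2]
      congr 2; ext w
      by_cases hw : w ∈ tsupport (dbar χ2)
      · have hwl : w - z ≠ 0 := by
          intro h0; exact hdis z (hsub hz) (sub_eq_zero.mp h0 ▸ hw)
        rw [← smul_sub, ← smul_sub, resolvent_identity (hs1 z hz) (hs2 w hw), smul_smul (w - z)⁻¹,
          inv_mul_cancel₀ hwl, one_smul, mul_smul_comm]
      · simp [image_eq_zero_of_notMem_tsupport hw]
    · simp [hf, image_eq_zero_of_notMem_tsupport hz]
  have hfc : Continuous f.uncurry := by
    rw [continuous_iff_continuousAt]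
    rintro ⟨z, w⟩
    by_cases hzw : z ∈ tsupport (dbar χ1) ∧ w ∈ tsupport (dbar χ2)
    · have hwl : w - z ≠ 0 := by
        intro h0; exact hdis z (hsub hzw.1) (sub_eq_zero.mp h0 ▸ hzw.2)
      have c1 := continuous_dbar hχ1
      have c2 := continuous_dbar hχ2
      have c3 : ContinuousAt (fun p : ℂ × ℂ => (p.2 - p.1)⁻¹) (z, w) :=
        ContinuousAt.inv₀ (by fun_prop) hwl
      have c4 : ContinuousAt (fun p : ℂ × ℂ => resolvent a p.2) (z, w) :=
        ContinuousAt.comp (f := Prod.snd) (resolvent_contAt (hs2 w hzw.2)) continuousAt_snd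
      have c5 : ContinuousAt (fun p : ℂ × ℂ => dbar χ1 p.1 * dbar χ2 p.2) (z, w) := by fun_prop
      exact (c5.mul c3).smul c4
    · have : f.uncurry =ᶠ[𝓝 (z, w)] fun _ => 0 := by
        rw [not_and_or] at hzw
        rcases hzw with h | h
        · have := (notMem_tsupport_iff_eventuallyEq.mp h)
          filter_upwards [continuousAt_fst.eventually this] with p hp
          simp [hf, Function.uncurry]; left; left; left; exact hp
        · have := (notMem_tsupport_iff_eventuallyEq.mp h)
          filter_upwards [continuousAt_snd.eventually this] with p hp
          simp [hf, Function.uncurry]; left; left; right; exact hp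
      exact continuousAt_const.congr this.symm
  have hfs : HasCompactSupport f.uncurry := by
    apply HasCompactSupport.intro ((hasCompactSupport_dbar hc1).isCompact.prod (hasCompactSupport_dbar hc2).isCompact)
    rintro ⟨z, w⟩ h
    rw [Set.mem_prod, not_and_or] at h
    rcases h with h | h
    · simp [hf, Function.uncurry, image_eq_zero_of_notMem_tsupport h]
    · simp [hf, Function.uncurry, image_eq_zero_of_notMem_tsupport h]
  have hfi : Integrable (fun z => ∫ w, f z w) := 
    (hfc.integrable_of_hasCompactSupport (μ := (volume : Measure ℂ).prod volume) hfs).integral_prod_left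
  have hz0 : ∫ z, ∫ w, f z w = 0 := by
    rw [integral_integral_swap_of_hasCompactSupport hfc hfs]
    have : ∀ w, ∫ z, f z w = 0 := by
      intro w
      by_cases hw : w ∈ tsupport (dbar χ2)
      · have hw1 : w ∉ tsupport χ1 := fun h => hdis w h hw
        have := integral_cauchy_zero hχ1 hc1 hw1
        have e : ∀ z, f z w = (dbar χ1 z * (z - w)⁻¹) • ((- dbar χ2 w) • resolvent a w) := by
          intro z
          simp only [hf, smul_smul]
          congr 1
          rw [← neg_sub z w, inv_neg]; ring
        simp_rw [e]
        rw [integral_smul_const, this, zero_smul]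
      · simp [hf, image_eq_zero_of_notMem_tsupport hw]
    simp [this]
  conv_lhs => rw [rint]
  rw [← integral_mul_const_of_integrable i1]
  simp_rw [step]
  have i1k : Integrable (fun w => kappa • dbar χ1 w • resolvent a w) := i1.smul kappa
  rw [integral_sub i1k hfi, hz0, integral_smul, sub_zero]; rfl

theorem riesz_connected [Nontrivial A] (hid : ∀ e : A, e * e = e → e = 0 ∨ e = 1) (a : A) :
    IsConnected (spectrum ℂ a) := by
  refine ⟨spectrum.nonempty a, ?_⟩
  rw [isPreconnected_iff_subset_of_fully_disjoint_closed (spectrum.isClosed a)]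
  intro u v hu hv huv hd
  have hcomp := spectrum.isCompact (𝕜 := ℂ) a
  have hK1 : IsCompact (spectrum ℂ a ∩ u) := hcomp.inter_right hu
  obtain ⟨χ1, hχ1, hc1, hs1, ho1⟩ := exists_cutoff hK1 hv.isOpen_compl (by
    intro x hx hxv; exact Set.disjoint_left.mp hd hx.2 hxv)
  obtain ⟨χ2, hχ2, hc2, hs2, ho2⟩ := exists_cutoff hc1.isCompact hv.isOpen_compl hs1
  have hsp : ∀ χ : ℂ → ℂ, tsupport χ ⊆ vᶜ → (∀ z ∈ spectrum ℂ a ∩ u, ∀ᶠ w in 𝓝 z, χ w = 1) →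
      ∀ w ∈ tsupport (dbar χ), w ∉ spectrum ℂ a := by
    intro χ h1 h2 w hw hwa
    rcases huv hwa with h | h
    · exact notMem_tsupport_dbar (h2 w ⟨hwa, h⟩) hw
    · exact h1 (tsupport_dbar_subset χ hw) h
  have ho2' : ∀ z ∈ spectrum ℂ a ∩ u, ∀ᶠ w in 𝓝 z, χ2 w = 1 := by
    intro z hz
    apply ho2
    apply subset_tsupport
    simp [(ho1 z hz).self_of_nhds]
  have hd1 := hsp χ1 hs1 ho1
  have hd2 := hsp χ2 hs2 ho2'
  have i1 := dbar_mul_integrable hχ1 hc1 (R := resolvent a) (fun w hw => resolvent_contAt (hd1 w hw))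
  have i2 := dbar_mul_integrable hχ2 hc2 (R := resolvent a) (fun w hw => resolvent_contAt (hd2 w hw))
  have heq : rint a χ2 = rint a χ1 := by
    have h0 := integral_dbar_smul_eq_zero (hχ2.sub hχ1) (hc2.sub hc1) (spectrum.isOpen_resolventSet a)
      (resolvent_diff a) (by
        intro w hw
        by_contra hwa
        have hwa' : w ∈ spectrum ℂ a := hwa
        rcases huv hwa' with h | h
        · refine notMem_tsupport_iff_eventuallyEq.mpr ?_ hw
          filter_upwards [ho1 w ⟨hwa', h⟩, ho2' w ⟨hwa', h⟩] with x h1 h2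
          simp [h1, h2]
        · refine notMem_tsupport_iff_eventuallyEq.mpr ?_ hw
          have n1 : w ∉ tsupport χ1 := fun hh => hs1 hh h
          have n2 : w ∉ tsupport χ2 := fun hh => hs2 hh h
          filter_upwards [notMem_tsupport_iff_eventuallyEq.mp n1, notMem_tsupport_iff_eventuallyEq.mp n2] with x h1 h2
          simp [h1, h2])
    simp_rw [dbar_sub hχ2 hχ1, sub_smul] at h0
    rw [integral_sub i2 i1, sub_eq_zero] at h0
    exact h0
  have hmul := riesz_mul hχ1 hc1 hχ2 hc2 hd1 hd2 ho2
  rw [heq] at hmul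
  have hk := kappa_ne_zero
  have hidem : (kappa⁻¹ • rint a χ1) * (kappa⁻¹ • rint a χ1) = kappa⁻¹ • rint a χ1 := by
    rw [smul_mul_smul_comm, hmul, smul_smul]
    congr 1; field_simp
  rcases hid _ hidem with h | h
  · right
    have hE : rint a χ1 = 0 := (smul_eq_zero_iff_right (inv_ne_zero hk)).mp h
    intro x hx
    rcases huv hx with h1 | h1
    · exfalso
      refine riesz_unit hχ1 hc1 hd1 (ho1 x ⟨hx, h1⟩) (integral_cauchy_one hχ1 hc1 (ho1 x ⟨hx, h1⟩)) ⟨kappa, hk, ?_⟩ hx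
      simp [hE]
    · exact h1
  · left
    have hE : rint a χ1 = algebraMap ℂ A kappa := by
      rw [Algebra.algebraMap_eq_smul_one, ← h, smul_smul, mul_inv_cancel₀ hk, one_smul]
    intro x hx
    rcases huv hx with h1 | h1
    · exact h1
    · exfalso
      have n1 : x ∉ tsupport χ1 := fun hh => hs1 hh h1
      refine riesz_unit hχ1 hc1 hd1 (notMem_tsupport_iff_eventuallyEq.mp n1) (integral_cauchy_zero hχ1 hc1 n1) ⟨-kappa, neg_ne_zero.mpr hk, ?_⟩ hx
      simp [hE]

end riesz2
end BSProof

namespace BSProof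

lemma idem_trivial {A : Type*} [CStarAlgebra A]
    (hproj : ∀ p : A, p * p = p → star p = p → p = 0 ∨ p = 1) (e : A) (he : e * e = e) :
    e = 0 ∨ e = 1 := by
  set f := star e with hf
  have hff : f * f = f := by rw [hf, ← star_mul, he]
  have hee : ∀ x, e * (e * x) = e * x := fun x => by rw [← mul_assoc, he]
  have hff2 : ∀ x, f * (f * x) = f * x := fun x => by rw [← mul_assoc, hff]
  set z := 1 + star (e - f) * (e - f) with hz
  have hzu : IsUnit z := by
    have h1 : (-1 : ℝ) ∉ spectrum ℝ (star (e - f) * (e - f)) := by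
      intro h
      have := spectrum_star_mul_self_nonneg _ h
      linarith
    rw [spectrum.notMem_iff] at h1
    have := h1.neg
    convert this using 1
    rw [hz]; simp; abel
  have hsf : star f = e := by rw [hf, star_star]
  have hzz : z = 1 + (f * e - f - e + e * f) := by
    rw [hz, star_sub, hsf]
    simp only [← hf, sub_mul, mul_sub, he, hff]; abel
  have hez : e * z = e * f * e := by
    rw [hzz]; simp only [mul_add, mul_sub, he, hee, mul_one, mul_assoc]; abel
  have hze : z * e = e * f * e := by
    rw [hzz]; simp only [add_mul, sub_mul, he, one_mul, mul_assoc]; abel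
  have hsz : star z = z := by rw [hz]; simp
  have hzf : z * f = f * z := by
    have := congrArg star (hez.trans hze.symm)
    simpa [hsz, ← hf] using this
  obtain ⟨Z, hZ⟩ := hzu
  set w : A := ((Z⁻¹ : Aˣ) : A) with hw
  have hzw : z * w = 1 := by rw [← hZ]; exact Z.mul_inv
  have hwz : w * z = 1 := by rw [← hZ]; exact Z.inv_mul
  have hcom : ∀ x, x * z = z * x → w * x = x * w := by
    intro x hx
    calc w * x = w * (x * z) * w := by rw [mul_assoc, mul_assoc, hzw, mul_one]
      _ = x * w := by rw [hx, ← mul_assoc w, hwz, one_mul]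
  have hwe := hcom e (hez.trans hze.symm)
  have hwf := hcom f hzf.symm
  have hsw : star w = w := by
    have h1 : star w * z = 1 := by
      have := congrArg star hzw
      rwa [star_mul, hsz, star_one] at this
    calc star w = star w * (z * w) := by rw [hzw, mul_one]
      _ = w := by rw [← mul_assoc, h1, one_mul]
  set p := e * f * w with hp
  have hpe : p * e = e := by
    rw [hp, mul_assoc, hwe, ← mul_assoc, ← hez, mul_assoc, hzw, mul_one]
  have hep : e * p = p := by rw [hp, mul_assoc, hee]
  have hpp : p * p = p := by
    calc p * p = p * e * (f * w) := by rw [hp]; simp only [mul_assoc]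
      _ = p := by rw [hpe, hp, mul_assoc]
  have hsp : star p = p := by
    rw [hp, star_mul, star_mul, hsf, hsw, ← hf, ← mul_assoc, hwe, mul_assoc, hwf, ← mul_assoc]
  rcases hproj p hpp hsp with h | h
  · left; rw [← hpe, h, zero_mul]
  · right; rw [h, mul_one] at hep; exact hep

theorem connected_of_proj {B : Type*} [CStarAlgebra B] [Nontrivial B] (S : StarSubalgebra ℂ B)
    (hS : IsClosed (S : Set B))
    (hproj : ∀ p : B, p ∈ S → p * p = p → star p = p → p = 0 ∨ p = 1) (a : B) (ha : a ∈ S) :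
    IsConnected (spectrum ℂ a) := by
  have : IsClosed (S : Set B) := hS
  have h := riesz_connected (A := S) (fun e he => by
    apply idem_trivial _ e he
    rintro ⟨p, hp⟩ h1 h2
    have := hproj p hp (congrArg Subtype.val h1) (congrArg Subtype.val h2)
    rcases this with h | h
    · left; ext; exact h
    · right; ext; exact h) ⟨a, ha⟩
  rw [StarSubalgebra.spectrum_eq] at h
  exact h

end BSProof

namespace BSProof

open Module

section count

variable {E : Type*} [NormedAddCommGroup E] [InnerProductSpace ℂ E] [FiniteDimensional ℂ E]

lemma quad_form {T : E →ₗ[ℂ] E} (hT : T.IsSymmetric) {n : ℕ} (hn : finrank ℂ E = n) (v : E) :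
    RCLike.re (inner ℂ v (T v)) =
      ∑ i, hT.eigenvalues hn i * ‖(hT.eigenvectorBasis hn).repr v i‖ ^ 2 := by
  rw [← (hT.eigenvectorBasis hn).repr.inner_map_map, PiLp.inner_apply, map_sum]
  apply Finset.sum_congr rfl
  intro i _
  rw [hT.eigenvectorBasis_apply_self_apply hn v i]
  set z := (hT.eigenvectorBasis hn).repr v i
  have : inner ℂ z ((hT.eigenvalues hn i : ℂ) * z) = ((hT.eigenvalues hn i * ‖z‖ ^ 2 : ℝ) : ℂ) := by
    rw [← smul_eq_mul, inner_smul_right, inner_self_eq_norm_sq_to_K]; simp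
  erw [this]; exact Complex.ofReal_re _

lemma norm_form {T : E →ₗ[ℂ] E} (hT : T.IsSymmetric) {n : ℕ} (hn : finrank ℂ E = n) (v : E) :
    ‖v‖ ^ 2 = ∑ i, ‖(hT.eigenvectorBasis hn).repr v i‖ ^ 2 := by
  rw [← (hT.eigenvectorBasis hn).repr.norm_map, EuclideanSpace.norm_sq_eq]

/-- coordinates of `v` outside of `s`. -/
noncomputable def coords {T : E →ₗ[ℂ] E} (hT : T.IsSymmetric) {n : ℕ} (hn : finrank ℂ E = n)
    (s : Finset (Fin n)) : E →ₗ[ℂ] ({i // i ∉ s} → ℂ) where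
  toFun v i := (hT.eigenvectorBasis hn).repr v i
  map_add' v w := by ext i; simp
  map_smul' c v := by ext i; simp

lemma finrank_coords {n : ℕ} (s : Finset (Fin n)) : finrank ℂ ({i // i ∉ s} → ℂ) + s.card = n := by
  rw [finrank_pi, Fintype.card_subtype_compl]
  simp
  have := s.card_le_univ
  simp at this
  omega

lemma count_le {T : E →ₗ[ℂ] E} (hT : T.IsSymmetric) {n : ℕ} (hn : finrank ℂ E = n)
    (s : Finset (Fin n)) {F : Type*} [AddCommGroup F] [Module ℂ F] [FiniteDimensional ℂ F]
    (g : E →ₗ[ℂ] F)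
    (h : ∀ v, v ≠ 0 → (∀ i, i ∉ s → (hT.eigenvectorBasis hn).repr v i = 0) → g v = 0 → False) :
    s.card ≤ finrank ℂ F := by
  have hinj : Function.Injective ((coords hT hn s).prod g) := by
    rw [← LinearMap.ker_eq_bot, LinearMap.ker_eq_bot']
    intro v hv
    by_contra h0
    simp only [LinearMap.prod_apply, Function.prod, Prod.mk_eq_zero] at hv
    refine h v h0 (fun i hi => ?_) hv.2
    exact congrFun hv.1 ⟨i, hi⟩
  have := LinearMap.finrank_le_finrank_of_injective hinj
  rw [finrank_prod] at this
  have := finrank_coords s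
  omega

lemma quad_gt {T : E →ₗ[ℂ] E} (hT : T.IsSymmetric) {n : ℕ} (hn : finrank ℂ E = n)
    {c : ℝ} {v : E} (hv : v ≠ 0)
    (h : ∀ i, i ∉ ({i | c < hT.eigenvalues hn i} : Finset (Fin n)) → (hT.eigenvectorBasis hn).repr v i = 0) :
    c * ‖v‖ ^ 2 < RCLike.re (inner ℂ v (T v)) := by
  rw [quad_form hT hn, norm_form hT hn, Finset.mul_sum]
  have hle : ∀ i, c * ‖(hT.eigenvectorBasis hn).repr v i‖ ^ 2 ≤ 
      hT.eigenvalues hn i * ‖(hT.eigenvectorBasis hn).repr v i‖ ^ 2 := by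
    intro i
    by_cases hi : c < hT.eigenvalues hn i
    · gcongr
    · rw [h i (by simpa using hi)]; simp
  apply Finset.sum_lt_sum (fun i _ => hle i)
  have : ∃ i, (hT.eigenvectorBasis hn).repr v i ≠ 0 := by
    by_contra hh
    push Not at hh
    apply hv
    apply (hT.eigenvectorBasis hn).repr.injective
    ext i; simp [hh i]
  obtain ⟨i, hi⟩ := this
  refine ⟨i, Finset.mem_univ _, ?_⟩
  have hci : c < hT.eigenvalues hn i := by
    by_contra hh; exact hi (h i (by simpa using hh))
  have : 0 < ‖(hT.eigenvectorBasis hn).repr v i‖ := norm_pos_iff.mpr hi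
  gcongr

lemma quad_le {T : E →ₗ[ℂ] E} (hT : T.IsSymmetric) {n : ℕ} (hn : finrank ℂ E = n)
    {c : ℝ} {v : E}
    (h : ∀ i, i ∈ ({i | c < hT.eigenvalues hn i} : Finset (Fin n)) → (hT.eigenvectorBasis hn).repr v i = 0) :
    RCLike.re (inner ℂ v (T v)) ≤ c * ‖v‖ ^ 2 := by
  rw [quad_form hT hn, norm_form hT hn, Finset.mul_sum]
  apply Finset.sum_le_sum
  intro i _
  by_cases hi : c < hT.eigenvalues hn i
  · rw [h i (by simpa using hi)]; simp
  · push Not at hi; gcongr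

/-- number of eigenvalues greater than `c`. -/
noncomputable def Np {T : E →ₗ[ℂ] E} (hT : T.IsSymmetric) (c : ℝ) : ℕ :=
  ({i | c < hT.eigenvalues rfl i} : Finset (Fin (finrank ℂ E))).card

lemma Np_le {T : E →ₗ[ℂ] E} (hT : T.IsSymmetric) {K : ℕ} (β : E →ₗ[ℂ] (Fin K → ℂ))
    {c : ℝ} (hβ : ∀ v, β v = 0 → ‖T v‖ ≤ c * ‖v‖) : Np hT c ≤ K := by
  have := count_le hT rfl {i | c < hT.eigenvalues rfl i} β (by
    intro v hv h1 h2
    have h3 := quad_gt hT rfl hv h1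
    have h4 : RCLike.re (inner ℂ v (T v)) ≤ ‖v‖ * ‖T v‖ := re_inner_le_norm _ _
    have := hβ v h2
    nlinarith [norm_nonneg v])
  simpa [Np] using this

lemma Np_close {T1 T2 : E →ₗ[ℂ] E} (hT1 : T1.IsSymmetric) (hT2 : T2.IsSymmetric) {c δ : ℝ}
    (h : ∀ v, ‖T1 v - T2 v‖ ≤ δ * ‖v‖) : Np hT1 (c + δ) ≤ Np hT2 c := by
  set s2 : Finset (Fin (finrank ℂ E)) := {i | c < hT2.eigenvalues rfl i} with hs2
  have := count_le hT1 rfl {i | c + δ < hT1.eigenvalues rfl i} (coords hT2 rfl s2ᶜ) (by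
    intro v hv h1 h2
    have h3 := quad_gt hT1 rfl hv h1
    have h4 := quad_le hT2 rfl (c := c) (v := v) (by
      intro i hi
      exact congrFun h2 ⟨i, by simpa [hs2] using hi⟩)
    have h5 : RCLike.re (inner ℂ v (T1 v - T2 v)) ≤ ‖v‖ * ‖T1 v - T2 v‖ := re_inner_le_norm _ _
    rw [inner_sub_right, map_sub] at h5
    have := h v
    nlinarith [norm_nonneg v])
  have h2 := finrank_coords s2ᶜ
  have h3 := Finset.card_add_card_compl s2
  simp only [Fintype.card_fin] at h3
  have e : Np hT2 c = s2.card := rfl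
  rw [e]
  unfold Np
  omega

lemma Np_anti {T : E →ₗ[ℂ] E} (hT : T.IsSymmetric) {c d : ℝ} (h : c ≤ d) : Np hT d ≤ Np hT c := by
  apply Finset.card_le_card
  intro i hi
  simp at hi ⊢
  linarith

variable {P Q : E →ₗ[ℂ] E}

lemma neg_symm {T : E →ₗ[ℂ] E} (hT : T.IsSymmetric) : (-T).IsSymmetric := by
  intro x y; simp [hT x y]


lemma sum_eig {T : E →ₗ[ℂ] E} (hT : T.IsSymmetric) (R : Finset ℝ)
    (hR : ∀ i, hT.eigenvalues rfl i ∈ R) (g : ℝ → ℝ) :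
    ∑ i, g (hT.eigenvalues rfl i) =
      ∑ μ ∈ R, (finrank ℂ (End.eigenspace T (μ : ℂ)) : ℝ) * g μ := by
  rw [← Finset.sum_fiberwise_of_maps_to (s := Finset.univ) (t := R) (fun i _ => hR i)]
  apply Finset.sum_congr rfl
  intro μ _
  rw [← hT.card_filter_eigenvalues_eq rfl (μ : ℂ)]
  rw [Finset.sum_congr rfl (g := fun _ => g μ)]
  · rw [Finset.sum_const, nsmul_eq_mul]
    congr 3
    ext i; simp
  · intro i hi
    simp at hi
    rw [hi]

lemma Np_eq {T : E →ₗ[ℂ] E} (hT : T.IsSymmetric) (R : Finset ℝ)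
    (hR : ∀ i, hT.eigenvalues rfl i ∈ R) (c : ℝ) :
    (Np hT c : ℝ) = ∑ μ ∈ R, (finrank ℂ (End.eigenspace T (μ : ℂ)) : ℝ) * (if c < μ then 1 else 0) := by
  rw [← sum_eig hT R hR (fun μ => if c < μ then 1 else 0), Np, Finset.card_filter]
  push_cast
  rfl

lemma eigenspace_le (hPP : P * P = P) (hQQ : Q * Q = Q) {μ : ℂ} (hμ : μ ^ 2 ≠ 1) :
    finrank ℂ (End.eigenspace (Q - P) μ) ≤ finrank ℂ (End.eigenspace (Q - P) (-μ)) := by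
  set S : E →ₗ[ℂ] E := 1 - P - Q with hS
  have hCS : (Q - P) * S = - (S * (Q - P)) := by
    rw [hS]; simp only [mul_sub, sub_mul, hPP, hQQ, mul_one, one_mul]; abel
  have hSS : S * S = 1 - (Q - P) * (Q - P) := by
    rw [hS]; simp only [mul_sub, sub_mul, hPP, hQQ, mul_one, one_mul]; abel
  have hmaps : ∀ v ∈ End.eigenspace (Q - P) μ, S v ∈ End.eigenspace (Q - P) (-μ) := by
    intro v hv
    rw [End.mem_eigenspace_iff] at hv ⊢
    have := LinearMap.congr_fun hCS v
    simp only [Module.End.mul_apply, LinearMap.neg_apply, hv, map_smul] at this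
    rw [this, neg_smul]
  apply LinearMap.finrank_le_finrank_of_injective (f := S.restrict hmaps)
  rw [← LinearMap.ker_eq_bot, LinearMap.ker_eq_bot']
  rintro ⟨v, hv⟩ h0
  have h1 : S v = 0 := congrArg Subtype.val h0
  have := LinearMap.congr_fun hSS v
  rw [End.mem_eigenspace_iff] at hv
  simp only [Module.End.mul_apply, h1, map_zero, LinearMap.sub_apply (1 : E →ₗ[ℂ] E), hv, map_smul, smul_smul,
    Module.End.one_apply] at this
  have h2 : (1 - μ ^ 2) • v = 0 := by rw [sub_smul, one_smul, pow_two]; exact this.symm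
  have h3 : v = 0 := by
    rcases smul_eq_zero.mp h2 with h | h
    · exact absurd (sub_eq_zero.mp h).symm hμ
    · exact h
  ext; exact h3

lemma eigenspace_eq (hPP : P * P = P) (hQQ : Q * Q = Q) {μ : ℂ} (hμ : μ ^ 2 ≠ 1) :
    finrank ℂ (End.eigenspace (Q - P) μ) = finrank ℂ (End.eigenspace (Q - P) (-μ)) := by
  apply le_antisymm (eigenspace_le hPP hQQ hμ)
  have := eigenspace_le (μ := -μ) hPP hQQ (by simpa using hμ)
  rwa [neg_neg] at this

lemma trace_eq_Np (hPP : P * P = P) (hQQ : Q * Q = Q)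
    (hT : (Q - P).IsSymmetric)
    {c : ℝ} (hc0 : 0 < c) (hc1 : c < 1) :
    RCLike.re (LinearMap.trace ℂ E (Q - P)) = (Np hT c : ℝ) - Np (neg_symm hT) c := by
  set R0 : Finset ℝ := Finset.univ.image (hT.eigenvalues rfl) ∪
    Finset.univ.image ((neg_symm hT).eigenvalues rfl) with hR0
  set R : Finset ℝ := R0 ∪ R0.image (fun x => -x) with hR
  have hsymm : ∀ x, x ∈ R → -x ∈ R := by
    intro x hx
    rw [hR, Finset.mem_union, Finset.mem_image] at hx ⊢
    rcases hx with h | ⟨y, hy, rfl⟩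
    · right; exact ⟨x, h, rfl⟩
    · left; simpa using hy
  have r1 : ∀ i, hT.eigenvalues rfl i ∈ R := by
    intro i; simp [hR, hR0]
  have r2 : ∀ i, (neg_symm hT).eigenvalues rfl i ∈ R := by
    intro i; simp [hR, hR0]
  have hrefl : ∀ f : ℝ → ℝ, ∑ μ ∈ R, f (-μ) = ∑ μ ∈ R, f μ := by
    intro f
    apply Finset.sum_nbij' (fun x => -x) (fun x => -x)
    · exact hsymm
    · exact hsymm
    · simp
    · simp
    · simp
  rw [hT.re_trace_eq_sum_eigenvalues rfl, Np_eq hT R r1, Np_eq (neg_symm hT) R r2]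
  rw [sum_eig hT R r1 (fun x => x)]
  have hneg : ∀ μ : ℂ, End.eigenspace (-(Q - P)) μ = End.eigenspace (Q - P) (-μ) := by
    intro μ; ext v
    rw [End.mem_eigenspace_iff, End.mem_eigenspace_iff, LinearMap.neg_apply, neg_smul, neg_eq_iff_eq_neg]
  set m : ℝ → ℝ := fun μ => (finrank ℂ (End.eigenspace (Q - P) (μ : ℂ)) : ℝ) with hm
  have e2 : ∑ μ ∈ R, (finrank ℂ (End.eigenspace (-(Q - P)) (μ : ℂ)) : ℝ) * (if c < μ then 1 else 0)
      = ∑ μ ∈ R, m μ * (if c < -μ then 1 else 0) := by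
    rw [← hrefl]
    apply Finset.sum_congr rfl
    intro μ _
    rw [hneg, hm, show -((-μ : ℝ) : ℂ) = (μ : ℂ) by push_cast; ring]
  rw [e2]
  set g : ℝ → ℝ := fun μ => μ - (if c < μ then 1 else 0) + (if c < -μ then 1 else 0) with hg
  have hmg : ∀ μ, m (-μ) * g (-μ) = - (m μ * g μ) := by
    intro μ
    have hgo : g (-μ) = - g μ := by simp only [hg, neg_neg]; ring
    by_cases hμ : μ ^ 2 = 1
    · have : g μ = 0 := by
        have hμ2 : μ * μ = 1 := by rw [← pow_two]; exact hμ
        rcases mul_self_eq_one_iff.mp hμ2 with h | h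
        · have : ¬ (c < -1) := by linarith
          simp [hg, h, hc1, this]
        · have : ¬ (c < -1) := by linarith
          simp [hg, h, hc1, this]
      rw [hgo, this]; simp
    · have : m (-μ) = m μ := by
        simp only [hm]
        rw [eigenspace_eq (μ := μ) hPP hQQ (by exact_mod_cast hμ), Complex.ofReal_neg]
      rw [hgo, this]; ring
  have h0 : ∑ μ ∈ R, m μ * g μ = 0 := by
    have := hrefl (fun μ => m μ * g μ)
    simp only [hmg, Finset.sum_neg_distrib] at this
    linarith
  have : ∑ μ ∈ R, m μ * g μ = ∑ μ ∈ R, m μ * μ - (∑ μ ∈ R, m μ * (if c < μ then 1 else 0)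
      - ∑ μ ∈ R, m μ * (if c < -μ then 1 else 0)) := by
    rw [← Finset.sum_sub_distrib, ← Finset.sum_sub_distrib]
    apply Finset.sum_congr rfl
    intro μ _; simp only [hg]; ring
  linarith

lemma exists_stall (f : ℕ → ℕ) (K : ℕ) (hf : ∀ j, f (j + 1) ≤ f j) (h0 : f 0 ≤ K) :
    ∃ j, j ≤ K ∧ f (j + 1) = f j := by
  by_contra h
  push Not at h
  have : ∀ j, j ≤ K + 1 → f j + j ≤ K := by
    intro j
    induction j with
    | zero => intro _; simpa using h0
    | succ j ih =>
      intro hj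
      have := ih (by omega)
      have h1 := h j (by omega)
      have h2 := hf j
      omega
  have := this (K + 1) le_rfl
  omega

lemma trace_const {P1 Q1 P2 Q2 : E →ₗ[ℂ] E} (hP1 : P1.IsSymmetric) (hQ1 : Q1.IsSymmetric)
    (hP2 : P2.IsSymmetric) (hQ2 : Q2.IsSymmetric) (hPP1 : P1 * P1 = P1) (hQQ1 : Q1 * Q1 = Q1)
    (hPP2 : P2 * P2 = P2) (hQQ2 : Q2 * Q2 = Q2) {K : ℕ} (β : E →ₗ[ℂ] (Fin K → ℂ))
    (hβ : ∀ v, β v = 0 → ‖Q1 v - P1 v‖ ≤ 1 / 4 * ‖v‖)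
    (hδ : ∀ v, ‖(Q1 v - P1 v) - (Q2 v - P2 v)‖ ≤ 1 / (8 * K + 8) * ‖v‖) :
    RCLike.re (LinearMap.trace ℂ E (Q1 - P1)) = RCLike.re (LinearMap.trace ℂ E (Q2 - P2)) := by
  have h1 : (Q1 - P1).IsSymmetric := hQ1.sub hP1
  have h2 : (Q2 - P2).IsSymmetric := hQ2.sub hP2
  set δ : ℝ := 1 / (8 * K + 8) with hδd
  have hδ0 : 0 < δ := by positivity
  set c : ℕ → ℝ := fun k => 1 / 4 + k * δ with hcd
  have hcs : ∀ k, c (k + 1) = c k + δ := by intro k; simp only [hcd]; push_cast; ring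
  set f : ℕ → ℕ := fun j => Np h1 (c (2 * j)) + Np (neg_symm h1) (c (2 * j)) with hf
  obtain ⟨j, hj, hj2⟩ := exists_stall f (2 * K) (by
      intro j
      have : c (2 * j) ≤ c (2 * (j + 1)) := by
        simp only [hcd]; gcongr; omega
      exact add_le_add (Np_anti h1 this) (Np_anti _ this))
    (by
      have a1 := Np_le h1 β (c := 1 / 4) (by simpa using hβ)
      have a2 := Np_le (neg_symm h1) β (c := 1 / 4) (by
        intro v hv; rw [LinearMap.neg_apply, norm_neg]; simpa using hβ v hv)
      simp only [hf, hcd]; simp only [Nat.mul_zero, Nat.cast_zero, zero_mul, add_zero]; omega)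
  have hc1 : ∀ k, k ≤ 4 * K + 2 → c k < 1 := by
    intro k hk
    have : (k : ℝ) ≤ 4 * K + 2 := by exact_mod_cast hk
    have h3 : (k : ℝ) * δ ≤ (4 * K + 2) * δ := by gcongr
    have h4 : (4 * K + 2) * δ < 1 / 2 := by
      rw [hδd, mul_one_div, div_lt_iff₀ (by positivity)]; linarith
    simp only [hcd]; linarith
  have hc0 : ∀ k, 0 < c k := by intro k; simp only [hcd]; positivity
  have d12 : ∀ v, ‖(Q1 - P1) v - (Q2 - P2) v‖ ≤ δ * ‖v‖ := hδ
  have d21 : ∀ v, ‖(Q2 - P2) v - (Q1 - P1) v‖ ≤ δ * ‖v‖ := by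
    intro v; rw [norm_sub_rev]; exact hδ v
  have n12 : ∀ v, ‖(-(Q1 - P1)) v - (-(Q2 - P2)) v‖ ≤ δ * ‖v‖ := by
    intro v
    rw [LinearMap.neg_apply, LinearMap.neg_apply, ← neg_sub', norm_neg]; exact hδ v
  have n21 : ∀ v, ‖(-(Q2 - P2)) v - (-(Q1 - P1)) v‖ ≤ δ * ‖v‖ := by
    intro v; rw [norm_sub_rev]; exact n12 v
  have a1 := Np_close h1 h2 (c := c (2 * j + 1)) d12
  have a2 := Np_close h2 h1 (c := c (2 * j)) d21
  have a3 := Np_close (neg_symm h1) (neg_symm h2) (c := c (2 * j + 1)) n12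
  have a4 := Np_close (neg_symm h2) (neg_symm h1) (c := c (2 * j)) n21
  rw [← hcs] at a1 a2 a3 a4
  have b1 : c (2 * j + 1 + 1) = c (2 * (j + 1)) := by congr 1
  rw [b1] at a1 a3
  have hle : c (2 * j) ≤ c (2 * (j + 1)) := by
    simp only [hcd]; gcongr; omega
  have m1 := Np_anti h1 hle
  have m2 := Np_anti (neg_symm h1) hle
  simp only [hf] at hj2
  rw [trace_eq_Np hPP1 hQQ1 h1 (hc0 (2 * j)) (hc1 _ (by omega)),
    trace_eq_Np hPP2 hQQ2 h2 (hc0 (2 * j + 1)) (hc1 _ (by omega))]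
  have e1 : Np h1 (c (2 * j)) = Np h2 (c (2 * j + 1)) := by omega
  have e2 : Np (neg_symm h1) (c (2 * j)) = Np (neg_symm h2) (c (2 * j + 1)) := by omega
  rw [e1, e2]

end count

section hilb

variable {E : Type*} [NormedAddCommGroup E] [InnerProductSpace ℂ E]

/-- rank of an operator -/
noncomputable def rk (P : E →L[ℂ] E) : ℕ := finrank ℂ (LinearMap.range (P : E →ₗ[ℂ] E))

/-- self-adjoint idempotents, elementary form -/
structure IsPr (P : E →L[ℂ] E) : Prop where
  idem : ∀ v, P (P v) = P v
  symm : ∀ v w, inner ℂ (P v) w = inner ℂ v (P w)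

lemma trace_restrict {P : E →L[ℂ] E} (hP : IsPr P) (W : Submodule ℂ E) [FiniteDimensional ℂ W]
    (hW : LinearMap.range (P : E →ₗ[ℂ] E) ≤ W) (h : ∀ v ∈ W, (P : E →ₗ[ℂ] E) v ∈ W) :
    LinearMap.trace ℂ W ((P : E →ₗ[ℂ] E).restrict h) = (rk P : ℂ) := by
  set p := LinearMap.range (P : E →ₗ[ℂ] E)
  have hp : LinearMap.IsProj (p.comap W.subtype) ((P : E →ₗ[ℂ] E).restrict h) := by
    constructor
    · intro x; exact ⟨x, rfl⟩
    · rintro ⟨x, hx⟩ ⟨y, hy⟩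
      ext
      change P x = x
      change P y = x at hy
      rw [← hy, hP.idem]
  rw [hp.trace, rk]
  congr 1
  exact LinearEquiv.finrank_eq (Submodule.comapSubtypeEquivOfLe hW)

theorem rk_const {P1 Q1 P2 Q2 : E →L[ℂ] E} (hP1 : IsPr P1) (hQ1 : IsPr Q1)
    (hP2 : IsPr P2) (hQ2 : IsPr Q2)
    (fP1 : FiniteDimensional ℂ (LinearMap.range (P1 : E →ₗ[ℂ] E)))
    (fQ1 : FiniteDimensional ℂ (LinearMap.range (Q1 : E →ₗ[ℂ] E)))
    (fP2 : FiniteDimensional ℂ (LinearMap.range (P2 : E →ₗ[ℂ] E)))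
    (fQ2 : FiniteDimensional ℂ (LinearMap.range (Q2 : E →ₗ[ℂ] E)))
    {K : ℕ} (β : E →ₗ[ℂ] (Fin K → ℂ))
    (hβ : ∀ v, β v = 0 → ‖Q1 v - P1 v‖ ≤ 1 / 4 * ‖v‖)
    (hδ : ∀ v, ‖(Q1 v - P1 v) - (Q2 v - P2 v)‖ ≤ 1 / (8 * K + 8) * ‖v‖) :
    (rk Q1 : ℤ) - rk P1 = rk Q2 - rk P2 := by
  set W : Submodule ℂ E := (LinearMap.range (P1 : E →ₗ[ℂ] E) ⊔ LinearMap.range (Q1 : E →ₗ[ℂ] E)) ⊔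
    (LinearMap.range (P2 : E →ₗ[ℂ] E) ⊔ LinearMap.range (Q2 : E →ₗ[ℂ] E)) with hW
  have : FiniteDimensional ℂ W := by rw [hW]; infer_instance
  have wP1 : LinearMap.range (P1 : E →ₗ[ℂ] E) ≤ W := le_sup_left.trans le_sup_left
  have wQ1 : LinearMap.range (Q1 : E →ₗ[ℂ] E) ≤ W := le_sup_right.trans le_sup_left
  have wP2 : LinearMap.range (P2 : E →ₗ[ℂ] E) ≤ W := le_sup_left.trans le_sup_right
  have wQ2 : LinearMap.range (Q2 : E →ₗ[ℂ] E) ≤ W := le_sup_right.trans le_sup_right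
  have mm : ∀ P : E →L[ℂ] E, LinearMap.range (P : E →ₗ[ℂ] E) ≤ W → ∀ v ∈ W, (P : E →ₗ[ℂ] E) v ∈ W :=
    fun P hP v _ => hP ⟨v, rfl⟩
  have sy : ∀ (P : E →L[ℂ] E) (hw : LinearMap.range (P : E →ₗ[ℂ] E) ≤ W), IsPr P →
      ((P : E →ₗ[ℂ] E).restrict (mm P hw)).IsSymmetric := by
    intro P hw hP x y
    exact hP.symm x y
  have idp : ∀ (P : E →L[ℂ] E) (hw : LinearMap.range (P : E →ₗ[ℂ] E) ≤ W), IsPr P →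
      ((P : E →ₗ[ℂ] E).restrict (mm P hw)) * ((P : E →ₗ[ℂ] E).restrict (mm P hw))
        = (P : E →ₗ[ℂ] E).restrict (mm P hw) := by
    intro P hw hP
    ext x
    exact hP.idem x
  have key := trace_const (sy P1 wP1 hP1) (sy Q1 wQ1 hQ1) (sy P2 wP2 hP2) (sy Q2 wQ2 hQ2)
    (idp P1 wP1 hP1) (idp Q1 wQ1 hQ1) (idp P2 wP2 hP2) (idp Q2 wQ2 hQ2) (β.comp W.subtype)
    (fun v hv => hβ v hv) (fun v => hδ v)
  rw [map_sub (LinearMap.trace ℂ W), map_sub (LinearMap.trace ℂ W), trace_restrict hP1 W wP1, trace_restrict hQ1 W wQ1,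
    trace_restrict hP2 W wP2, trace_restrict hQ2 W wQ2] at key
  have key2 : (rk Q1 : ℝ) - rk P1 = rk Q2 - rk P2 := by simpa using key
  exact_mod_cast key2

end hilb
end BSProof

namespace BSProof

open Topology

/-- Evaluation of an element of the group algebra. -/
noncomputable def ev {G A : Type*} [AddCommGroup A] [Module ℂ A] (f : G → A) (a : G →₀ ℂ) : A :=
  Finsupp.linearCombination ℂ f a

lemma ev_eq {G A : Type*} [AddCommGroup A] [Module ℂ A] (f : G → A) (a : G →₀ ℂ) :
    ev f a = ∑ g ∈ a.support, a g • f g := by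
  rw [ev, Finsupp.linearCombination_apply, Finsupp.sum]

section ext

variable {G : Type*} [Group G]

/-- elementary unitary representation in a star algebra. -/
structure IsRep {A : Type*} [Ring A] [StarRing A] (f : G → A) : Prop where
  one : f 1 = 1
  mul : ∀ g h, f (g * h) = f g * f h
  star : ∀ g, star (f g) = f g⁻¹

lemma isRep_of_hom {A : Type*} [Ring A] [StarRing A] (π : G →* unitary A) : IsRep (fun g => (π g : A)) where
  one := by simp
  mul := by simp
  star g := by rw [map_inv]; rfl

lemma mem_adjoin_iff {A : Type*} [Ring A] [StarRing A] [Algebra ℂ A] [StarModule ℂ A] {f : G → A}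
    (hf : IsRep f) (x : A) : x ∈ StarAlgebra.adjoin ℂ (Set.range f) ↔ ∃ a : G →₀ ℂ, ev f a = x := by
  constructor
  · intro hx
    induction hx using StarAlgebra.adjoin_induction with
    | mem x hx =>
      obtain ⟨g, rfl⟩ := hx
      exact ⟨Finsupp.single g 1, by simp [ev]⟩
    | algebraMap r => exact ⟨Finsupp.single 1 r, by simp [ev, hf.one, Algebra.algebraMap_eq_smul_one]⟩
    | add x y _ _ hx hy =>
      obtain ⟨a, rfl⟩ := hx
      obtain ⟨b, rfl⟩ := hy
      exact ⟨a + b, by simp [ev]⟩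
    | mul x y _ _ hx hy =>
      obtain ⟨a, rfl⟩ := hx
      obtain ⟨b, rfl⟩ := hy
      have : ∀ z ∈ LinearMap.range (Finsupp.linearCombination ℂ f), ∀ g : G,
          z * f g ∈ LinearMap.range (Finsupp.linearCombination ℂ f) := by
        intro z hz g
        rw [Finsupp.range_linearCombination] at hz ⊢
        induction hz using Submodule.span_induction with
        | mem x hx =>
          obtain ⟨h, rfl⟩ := hx
          rw [← hf.mul]
          exact Submodule.subset_span ⟨_, rfl⟩
        | zero => simp
        | add x y _ _ h1 h2 => rw [add_mul]; exact add_mem h1 h2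
        | smul c x _ h => rw [smul_mul_assoc]; exact Submodule.smul_mem _ _ h
      change _ ∈ LinearMap.range (Finsupp.linearCombination ℂ f)
      have h2 : ev f b ∈ Submodule.span ℂ (Set.range f) := by
        rw [← Finsupp.range_linearCombination]; exact ⟨b, rfl⟩
      generalize ev f b = z at h2
      induction h2 using Submodule.span_induction with
      | mem x hx =>
        obtain ⟨h, rfl⟩ := hx
        exact this _ ⟨a, rfl⟩ h
      | zero => simp
      | add x y _ _ h1 h2 => rw [mul_add]; exact add_mem h1 h2
      | smul c x _ h => rw [mul_smul_comm]; exact Submodule.smul_mem _ _ h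
    | star x _ hx =>
      obtain ⟨a, rfl⟩ := hx
      change _ ∈ LinearMap.range (Finsupp.linearCombination ℂ f)
      have h2 : ev f a ∈ Submodule.span ℂ (Set.range f) := by
        rw [← Finsupp.range_linearCombination]; exact ⟨a, rfl⟩
      rw [Finsupp.range_linearCombination]
      generalize ev f a = z at h2
      induction h2 using Submodule.span_induction with
      | mem x hx =>
        obtain ⟨h, rfl⟩ := hx
        rw [hf.star]
        exact Submodule.subset_span ⟨_, rfl⟩
      | zero => simp
      | add x y _ _ h1 h2 => rw [star_add]; exact add_mem h1 h2
      | smul c x _ h => rw [star_smul]; exact Submodule.smul_mem _ _ h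
  · rintro ⟨a, rfl⟩
    rw [ev_eq]
    exact sum_mem fun g _ => SMulMemClass.smul_mem (a g) (StarAlgebra.subset_adjoin ℂ (Set.range f) ⟨g, rfl⟩)

variable {A1 A2 : Type*} [CStarAlgebra A1] [CStarAlgebra A2]

theorem exists_ext {f1 : G → A1} {f2 : G → A2} (h1 : IsRep f1) (h2 : IsRep f2)
    (hle : ∀ a : G →₀ ℂ, ‖ev f2 a‖ ≤ ‖ev f1 a‖) :
    ∃ F : (StarAlgebra.adjoin ℂ (Set.range f1)).topologicalClosure →⋆ₐ[ℂ] A2,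
      (∀ (g : G) (hg : f1 g ∈ (StarAlgebra.adjoin ℂ (Set.range f1)).topologicalClosure),
        F ⟨f1 g, hg⟩ = f2 g) ∧ 
      ∀ (x : (StarAlgebra.adjoin ℂ (Set.range f1)).topologicalClosure) (ε : ℝ), 0 < ε →
        ∃ a : G →₀ ℂ, ‖(x : A1) - ev f1 a‖ < ε ∧ ‖F x - ev f2 a‖ < ε := by
  set f : G → A1 × A2 := fun g => (f1 g, f2 g) with hf
  have hr : IsRep f := ⟨by simp [hf, h1.one, h2.one], fun g h => by simp [hf, h1.mul, h2.mul],
    fun g => by simp only [hf, ← h1.star, ← h2.star]; rfl⟩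
  have hev : ∀ a, ev f a = (ev f1 a, ev f2 a) := by
    intro a
    simp only [ev_eq, hf, Prod.ext_iff, Prod.fst_sum, Prod.snd_sum, Prod.smul_fst, Prod.smul_snd, and_self]
  set Γ := (StarAlgebra.adjoin ℂ (Set.range f)).topologicalClosure with hΓ
  have hclos : ∀ z, z ∈ Γ ↔ z ∈ closure ((StarAlgebra.adjoin ℂ (Set.range f) : StarSubalgebra ℂ (A1 × A2)) : Set (A1 × A2)) := by
    intro z
    rw [hΓ, ← StarSubalgebra.topologicalClosure_coe]; rfl
  have hb : ∀ z ∈ Γ, ‖z.2‖ ≤ ‖z.1‖ := by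
    intro z hz
    rw [hclos] at hz
    have hc : IsClosed {z : A1 × A2 | ‖z.2‖ ≤ ‖z.1‖} := isClosed_le (by fun_prop) (by fun_prop)
    refine closure_minimal ?_ hc hz
    intro z hz
    obtain ⟨a, rfl⟩ := (mem_adjoin_iff hr z).mp hz
    rw [hev]; exact hle a
  have huniq : ∀ x y y', (x, y) ∈ Γ → (x, y') ∈ Γ → y = y' := by
    intro x y y' h h'
    have := hb _ (sub_mem h h')
    simp at this
    exact sub_eq_zero.mp this
  have hΓc : IsClosed (Γ : Set (A1 × A2)) := StarSubalgebra.isClosed_topologicalClosure _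
  have hiso : Isometry (fun z : Γ => (z : A1 × A2).1) := by
    apply Isometry.of_dist_eq
    intro z w
    have := hb _ (sub_mem z.2 w.2)
    rw [Subtype.dist_eq, dist_eq_norm, dist_eq_norm, Prod.norm_def, max_eq_left this]; rfl
  have : CompleteSpace Γ := hΓc.completeSpace_coe
  have hrange : IsClosed (Set.range (fun z : Γ => (z : A1 × A2).1)) := hiso.isClosedEmbedding.isClosed_range
  have hex : ∀ x ∈ (StarAlgebra.adjoin ℂ (Set.range f1)).topologicalClosure, ∃ y, (x, y) ∈ Γ := by
    intro x hx
    rw [← SetLike.mem_coe, StarSubalgebra.topologicalClosure_coe] at hx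
    have : x ∈ Set.range (fun z : Γ => (z : A1 × A2).1) := by
      refine closure_minimal ?_ hrange hx
      intro z hz
      obtain ⟨a, rfl⟩ := (mem_adjoin_iff h1 z).mp hz
      refine ⟨⟨ev f a, ?_⟩, by change (ev f a).1 = _; rw [hev]⟩
      exact StarSubalgebra.le_topologicalClosure _ ((mem_adjoin_iff hr _).mpr ⟨a, rfl⟩)
    obtain ⟨⟨⟨x', y⟩, hz⟩, rfl⟩ := this
    exact ⟨y, hz⟩
  choose! F hF using hex
  refine ⟨{ toFun := fun x => F x
            map_one' := huniq _ _ _ (hF _ (one_mem _)) (one_mem Γ)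
            map_mul' := fun x y => huniq _ _ _ (hF _ (mul_mem x.2 y.2)) (mul_mem (hF _ x.2) (hF _ y.2))
            map_zero' := huniq _ _ _ (hF _ (zero_mem _)) (zero_mem Γ)
            map_add' := fun x y => huniq _ _ _ (hF _ (add_mem x.2 y.2)) (add_mem (hF _ x.2) (hF _ y.2))
            commutes' := fun r => huniq _ _ _ (hF _ (algebraMap_mem _ r)) (algebraMap_mem Γ r)
            map_star' := fun x => huniq _ _ _ (hF _ (star_mem x.2)) (star_mem (hF _ x.2)) }, ?_, ?_⟩
  · intro g hg
    refine huniq _ _ _ (hF _ hg) ?_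
    exact StarSubalgebra.le_topologicalClosure _ (StarAlgebra.subset_adjoin ℂ _ ⟨g, rfl⟩)
  · intro x ε hε
    have := hF _ x.2
    rw [hclos, Metric.mem_closure_iff] at this
    obtain ⟨b, hb1, hb2⟩ := this ε hε
    obtain ⟨a, rfl⟩ := (mem_adjoin_iff hr _).mp hb1
    refine ⟨a, ?_⟩
    rw [hev, dist_eq_norm, Prod.norm_def, max_lt_iff] at hb2
    exact hb2

lemma norm_le_of_approx {f1 : G → A1} {f2 : G → A2} (hle : ∀ a : G →₀ ℂ, ‖ev f2 a‖ ≤ ‖ev f1 a‖)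
    {x : A1} {y : A2} (h : ∀ ε : ℝ, 0 < ε → ∃ a : G →₀ ℂ, ‖x - ev f1 a‖ < ε ∧ ‖y - ev f2 a‖ < ε) :
    ‖y‖ ≤ ‖x‖ := by
  apply le_of_forall_pos_le_add
  intro ε hε
  obtain ⟨a, h1, h2⟩ := h (ε / 2) (by linarith)
  have := hle a
  have n1 := norm_sub_norm_le (ev f1 a) x
  have n2 := norm_sub_norm_le y (ev f2 a)
  rw [norm_sub_rev] at n1
  linarith

end ext
end BSProof

namespace BSProof

section grp

variable {N : ℕ}

lemma bs_rel (N : ℕ) : BS.u N * BS.t N * (BS.u N)⁻¹ = BS.t N ^ N := by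
  have h : PresentedGroup.mk (BSRel N) (FreeGroup.of true * FreeGroup.of false * (FreeGroup.of true)⁻¹
      * ((FreeGroup.of false) ^ N)⁻¹) = 1 := PresentedGroup.one_of_mem (by simp [BSRel])
  simp only [map_mul, map_inv, map_pow] at h
  exact mul_inv_eq_one.mp h

lemma bs_conj (n : ℕ) (k : ℤ) : BS.u N ^ n * BS.t N ^ k * (BS.u N ^ n)⁻¹ = BS.t N ^ (k * (N : ℤ) ^ n) := by
  induction n with
  | zero => simp
  | succ n ih =>
    have h1 : ∀ m : ℤ, BS.u N * BS.t N ^ m * (BS.u N)⁻¹ = BS.t N ^ (m * (N : ℤ)) := by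
      intro m
      rw [← conj_zpow, bs_rel, mul_comm, zpow_mul, zpow_natCast]
    calc BS.u N ^ (n + 1) * BS.t N ^ k * (BS.u N ^ (n + 1))⁻¹
        = BS.u N * (BS.u N ^ n * BS.t N ^ k * (BS.u N ^ n)⁻¹) * (BS.u N)⁻¹ := by
          rw [pow_succ']; simp only [mul_inv_rev, mul_assoc]
      _ = _ := by rw [ih, h1]; congr 1; ring

/-- `u^{-M} t^k u^M`. -/
def tM (N M : ℕ) (k : ℤ) : BS N := (BS.u N ^ M)⁻¹ * BS.t N ^ k * BS.u N ^ M

lemma tM_add (M : ℕ) (k l : ℤ) : tM N M k * tM N M l = tM N M (k + l) := by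
  unfold tM; rw [zpow_add]; group

lemma tM_inv (M : ℕ) (k : ℤ) : (tM N M k)⁻¹ = tM N M (-k) := by
  unfold tM; rw [zpow_neg]; group

lemma tM_zero (M : ℕ) : tM N M 0 = 1 := by simp [tM]

lemma u_tM (M i : ℕ) (k : ℤ) : BS.u N ^ i * tM N M k = tM N M (k * (N : ℤ) ^ i) * BS.u N ^ i := by
  unfold tM
  rw [← bs_conj i k]
  have hc : BS.u N ^ i * (BS.u N ^ M)⁻¹ = (BS.u N ^ M)⁻¹ * BS.u N ^ i :=
    ((Commute.refl (BS.u N)).pow_pow i M).inv_right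
  have hc2 : BS.u N ^ M * BS.u N ^ i = BS.u N ^ i * BS.u N ^ M :=
    ((Commute.refl (BS.u N)).pow_pow M i)
  simp only [mul_assoc]
  rw [hc2, ← mul_assoc (BS.u N ^ i)⁻¹, inv_mul_cancel, one_mul, ← mul_assoc, hc]
  simp only [mul_assoc]

lemma t_eq_tM (M : ℕ) (k : ℤ) : BS.t N ^ k = tM N M (k * (N : ℤ) ^ M) := by
  unfold tM; rw [← bs_conj]; group

theorem normal_form (g : BS N) : ∃ M0 : ℕ, ∀ M, M0 ≤ M → ∃ k j : ℤ, g = tM N M k * BS.u N ^ j := by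
  have hg : g ∈ Subgroup.closure (Set.range (PresentedGroup.of (rels := BSRel N))) := by
    rw [PresentedGroup.closure_range_of]; trivial
  induction hg using Subgroup.closure_induction_left with
  | one => exact ⟨0, fun M _ => ⟨0, 0, by simp [tM_zero]⟩⟩
  | mul_left x hx y _ ih =>
    obtain ⟨M0, h⟩ := ih
    obtain ⟨b, rfl⟩ := hx
    refine ⟨M0, fun M hM => ?_⟩
    obtain ⟨k, j, rfl⟩ := h M hM
    cases b with
    | false =>
      refine ⟨1 * (N : ℤ) ^ M + k, j, ?_⟩
      rw [← tM_add, ← t_eq_tM, zpow_one, mul_assoc]; rfl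
    | true =>
      refine ⟨k * (N : ℤ) ^ 1, 1 + j, ?_⟩
      have := u_tM (N := N) M 1 k
      rw [zpow_add, ← mul_assoc (tM _ _ _), zpow_one]
      rw [pow_one (BS.u N)] at this
      rw [← this, mul_assoc]; rfl
  | inv_mul_cancel x hx y _ ih =>
    obtain ⟨M0, h⟩ := ih
    obtain ⟨b, rfl⟩ := hx
    refine ⟨M0 + 1, fun M hM => ?_⟩
    cases b with
    | false =>
      obtain ⟨k, j, rfl⟩ := h M (by omega)
      refine ⟨-1 * (N : ℤ) ^ M + k, j, ?_⟩
      rw [← tM_add, ← t_eq_tM, zpow_neg, zpow_one, mul_assoc]; rfl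
    | true =>
      obtain ⟨M, rfl⟩ : ∃ M', M = M' + 1 := ⟨M - 1, by omega⟩
      obtain ⟨k, j, rfl⟩ := h M (by omega)
      refine ⟨k, -1 + j, ?_⟩
      change (BS.u N)⁻¹ * _ = _
      unfold tM
      rw [pow_succ, zpow_add]
      have : ∀ i, BS.u N ^ i * BS.u N = BS.u N * BS.u N ^ i := fun i => (Commute.refl (BS.u N)).pow_left i
      group

/-- common normal form for a finite set -/
lemma normal_form_finset (S : Finset (BS N)) : ∃ M : ℕ, ∀ M', M ≤ M' → ∀ g ∈ S, ∃ k j : ℤ, g = tM N M' k * BS.u N ^ j := by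
  choose m hm using normal_form (N := N)
  refine ⟨S.sup m, fun M' hM g hg => hm g M' (le_trans (Finset.le_sup hg) hM)⟩

/-- affine action -/
noncomputable def aff (hN : 2 ≤ N) : BS N →* Equiv.Perm ℝ :=
  have hN0 : (N : ℝ) ≠ 0 := by positivity
  PresentedGroup.toGroup (rels := BSRel N)
    (f := fun b => if b then Equiv.mulLeft₀ (N : ℝ) hN0 else Equiv.addLeft (1 : ℝ)) (by
      intro r hr
      rw [BSRel, Set.mem_singleton_iff] at hr
      subst hr
      simp only [map_mul, map_inv, map_pow, FreeGroup.lift_apply_of, if_true, Bool.false_eq_true, if_false]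
      rw [mul_inv_eq_one, mul_inv_eq_iff_eq_mul]
      have : ∀ n : ℕ, (Equiv.addLeft (1 : ℝ)) ^ n = Equiv.addLeft (n : ℝ) := by
        intro n
        induction n with
        | zero => ext x; simp
        | succ n ih => ext x; rw [pow_succ, ih]; simp
      rw [this]
      ext x
      simp; ring)

/-- exponent of `u` -/
def uexp (N : ℕ) : BS N →* Multiplicative ℤ :=
  PresentedGroup.toGroup (rels := BSRel N)
    (f := fun b => if b then Multiplicative.ofAdd 1 else 1) (by
      intro r hr
      rw [BSRel, Set.mem_singleton_iff] at hr
      subst hr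
      simp)

/-- exponent of `u` as integer -/
def jj (g : BS N) : ℤ := (uexp N g).toAdd

/-- translation part -/
noncomputable def rr (hN : 2 ≤ N) (g : BS N) : ℝ := aff hN g 0

lemma jj_mul (g h : BS N) : jj (g * h) = jj g + jj h := by simp [jj]
lemma jj_one : jj (1 : BS N) = 0 := by simp [jj]
lemma jj_u : jj (BS.u N) = 1 := by simp [jj, uexp, BS.u]
lemma jj_t : jj (BS.t N) = 0 := by simp [jj, uexp, BS.t]

lemma aff_u (hN : 2 ≤ N) (y : ℝ) : aff hN (BS.u N) y = N * y := by simp [aff, BS.u]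
lemma aff_t (hN : 2 ≤ N) (y : ℝ) : aff hN (BS.t N) y = 1 + y := by simp [aff, BS.t]

lemma aff_eq (hN : 2 ≤ N) (g : BS N) : ∀ y, aff hN g y = (N : ℝ) ^ (jj g) * y + rr hN g := by
  have hN0 : (N : ℝ) ≠ 0 := by positivity
  have hg : g ∈ Subgroup.closure (Set.range (PresentedGroup.of (rels := BSRel N))) := by
    rw [PresentedGroup.closure_range_of]; trivial
  have hinv : ∀ (x : BS N) (y z : ℝ), aff hN x z = y → aff hN x⁻¹ y = z := by
    intro x y z h
    rw [map_inv, Equiv.Perm.inv_eq_iff_eq, h]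
  have hju : jj (BS.u N)⁻¹ = -1 := by simp [jj, uexp, BS.u]
  have hjt : jj (BS.t N)⁻¹ = 0 := by simp [jj, uexp, BS.t]
  induction hg using Subgroup.closure_induction_left with
  | one => simp [rr, jj_one]
  | mul_left x hx y _ ih =>
    intro z
    unfold rr
    obtain ⟨b, rfl⟩ := hx
    rw [map_mul, Equiv.Perm.mul_apply, Equiv.Perm.mul_apply, ih z, ih 0, jj_mul, zpow_add₀ hN0]
    cases b with
    | false =>
      change aff hN (BS.t N) _ = N ^ jj (BS.t N) * _ * z + aff hN (BS.t N) _
      rw [aff_t, aff_t, jj_t]; simp; ring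
    | true =>
      change aff hN (BS.u N) _ = N ^ jj (BS.u N) * _ * z + aff hN (BS.u N) _
      rw [aff_u, aff_u, jj_u]; simp; ring
  | inv_mul_cancel x hx y _ ih =>
    intro z
    unfold rr
    obtain ⟨b, rfl⟩ := hx
    rw [map_mul, Equiv.Perm.mul_apply, Equiv.Perm.mul_apply, ih z, ih 0, jj_mul, zpow_add₀ hN0]
    cases b with
    | false =>
      change aff hN (BS.t N)⁻¹ _ = N ^ jj (BS.t N)⁻¹ * _ * z + aff hN (BS.t N)⁻¹ _
      have h1 : ∀ y, aff hN (BS.t N)⁻¹ y = y - 1 := fun y => hinv _ _ _ (by rw [aff_t]; ring)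
      rw [h1, h1, hjt]; simp; ring
    | true =>
      change aff hN (BS.u N)⁻¹ _ = N ^ jj (BS.u N)⁻¹ * _ * z + aff hN (BS.u N)⁻¹ _
      have h1 : ∀ y, aff hN (BS.u N)⁻¹ y = y / N := fun y => hinv _ _ _ (by rw [aff_u]; field_simp)
      rw [h1, h1, hju]; simp; field_simp

lemma rr_mul (hN : 2 ≤ N) (g h : BS N) : rr hN (g * h) = rr hN g + (N : ℝ) ^ (jj g) * rr hN h := by
  have h1 := aff_eq hN g (rr hN h)
  have h2 : rr hN (g * h) = aff hN g (rr hN h) := by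
    simp only [rr, map_mul, Equiv.Perm.mul_apply]
  rw [h2, h1]; ring

lemma rr_one (hN : 2 ≤ N) : rr hN 1 = 0 := by simp [rr]
lemma rr_u (hN : 2 ≤ N) : rr hN (BS.u N) = 0 := by simp [rr, aff_u]
lemma rr_t (hN : 2 ≤ N) : rr hN (BS.t N) = 1 := by simp [rr, aff_t]

lemma rr_u_zpow (hN : 2 ≤ N) (j : ℤ) : rr hN (BS.u N ^ j) = 0 := by
  have h : ∀ n : ℕ, rr hN (BS.u N ^ n) = 0 := by
    intro n
    induction n with
    | zero => simp [rr_one]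
    | succ n ih => rw [pow_succ, rr_mul, ih, rr_u]; simp
  have hinv : ∀ g : BS N, rr hN g = 0 → rr hN g⁻¹ = 0 := by
    intro g hg
    have := rr_mul hN g⁻¹ g
    rw [inv_mul_cancel, rr_one, hg] at this
    simpa using this.symm
  cases j with
  | ofNat n => simpa using h n
  | negSucc n => rw [zpow_negSucc]; exact hinv _ (h _)

lemma jj_zpow (g : BS N) (k : ℤ) : jj (g ^ k) = k * jj g := by simp [jj]

lemma jj_inv (g : BS N) : jj (g⁻¹) = - jj g := by simp [jj]

lemma rr_t_zpow (hN : 2 ≤ N) (k : ℤ) : rr hN (BS.t N ^ k) = k := by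
  induction k with
  | zero => simp [rr_one]
  | succ i ih => rw [zpow_add_one, rr_mul, ih, jj_zpow, jj_t, rr_t]; simp
  | pred i ih =>
    have h : rr hN (BS.t N ^ (-(i : ℤ) - 1) * BS.t N) = -(i : ℝ) := by
      rw [← zpow_add_one]; simpa using ih
    rw [rr_mul, jj_zpow, jj_t, rr_t] at h
    simp at h ⊢; linarith

lemma rr_tM (hN : 2 ≤ N) (M : ℕ) (k j : ℤ) : rr hN (tM N M k * BS.u N ^ j) = k / (N : ℝ) ^ M := by
  have h2 : rr hN (BS.u N ^ M)⁻¹ = 0 := by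
    have := rr_u_zpow hN (-(M : ℤ)); simpa using this
  have h3 : rr hN (BS.u N ^ M) = 0 := by
    have := rr_u_zpow hN (M : ℤ); simpa using this
  have h4 : jj (BS.u N ^ M)⁻¹ = -(M : ℤ) := by
    have := jj_zpow (BS.u N) (-(M : ℤ)); rw [jj_u] at this; simpa using this
  rw [rr_mul, rr_u_zpow, tM, rr_mul, rr_mul, h2, h3, rr_t_zpow, h4]
  simp; field_simp

lemma jj_tM (M : ℕ) (k j : ℤ) : jj (tM N M k * BS.u N ^ j) = j := by
  have h4 : jj (BS.u N ^ M)⁻¹ = -(M : ℤ) := by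
    have := jj_zpow (BS.u N) (-(M : ℤ)); rw [jj_u] at this; simpa using this
  have h5 : jj (BS.u N ^ M) = (M : ℤ) := by
    have := jj_zpow (BS.u N) (M : ℤ); rw [jj_u] at this; simpa using this
  rw [jj_mul, jj_zpow, tM, jj_mul, jj_mul, jj_zpow, h4, h5, jj_t, jj_u]; ring

lemma tM_injective (hN : 2 ≤ N) {M : ℕ} {k k' j j' : ℤ} (h : tM N M k * BS.u N ^ j = tM N M k' * BS.u N ^ j') :
    k = k' ∧ j = j' := by
  have h1 := congrArg (rr hN) h
  have h2 := congrArg jj h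
  rw [rr_tM, rr_tM] at h1
  rw [jj_tM, jj_tM] at h2
  refine ⟨?_, h2⟩
  have : (N : ℝ) ^ M ≠ 0 := by positivity
  field_simp at h1
  exact_mod_cast h1

lemma rr_jj_injective (hN : 2 ≤ N) {g h : BS N} (h1 : rr hN g = rr hN h) (h2 : jj g = jj h) : g = h := by
  classical
  obtain ⟨M, hM⟩ := normal_form_finset ({g, h} : Finset (BS N))
  obtain ⟨k, j, hg⟩ := hM M le_rfl g (by simp)
  obtain ⟨k', j', hh⟩ := hM M le_rfl h (by simp)
  have : (N : ℝ) ^ M ≠ 0 := by positivity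
  rw [hg, hh] at h1 h2 ⊢
  rw [rr_tM, rr_tM] at h1
  rw [jj_tM, jj_tM] at h2
  field_simp at h1
  have : k = k' := by exact_mod_cast h1
  rw [this, h2]

/-- Følner sets -/
theorem folner (hN : 2 ≤ N) (S : Finset (BS N)) (q : ℕ) (hq : 1 ≤ q) :
    ∃ F F' : Finset (BS N), F' ⊆ F ∧ (∀ x ∈ F', ∀ s ∈ S, x * s ∈ F) ∧ 
      ∃ c : ℕ, 0 < c ∧ F.card = c * q ^ 2 ∧ F'.card = c * (q - 1) ^ 2 := by
  classical
  obtain ⟨M, hM⟩ := normal_form_finset S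
  have hM' := hM M le_rfl
  choose! k j hkj using hM'
  set J : ℕ := S.sup (fun g => (j g).natAbs) + 1 with hJ
  set κ : ℕ := S.sup (fun g => (k g).natAbs) + 1 with hκ
  have hjJ : ∀ g ∈ S, |j g| ≤ J := by
    intro g hg
    have : (j g).natAbs ≤ S.sup (fun g => (j g).natAbs) := Finset.le_sup (f := fun g => (j g).natAbs) hg
    rw [Int.abs_eq_natAbs]
    omega
  have hkκ : ∀ g ∈ S, |k g| ≤ κ := by
    intro g hg
    have : (k g).natAbs ≤ S.sup (fun g => (k g).natAbs) := Finset.le_sup (f := fun g => (k g).natAbs) hg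
    rw [Int.abs_eq_natAbs]
    omega
  set L : ℕ := 2 * J * q with hL
  set c : ℕ := N ^ L * κ with hc
  set R : ℕ := 2 * c * q with hR
  set e : ℤ × ℤ → BS N := fun p => tM N M p.1 * BS.u N ^ p.2 with he
  have hinj : Function.Injective e := by
    rintro ⟨a, b⟩ ⟨a', b'⟩ h
    obtain ⟨h1, h2⟩ := tM_injective hN h
    exact Prod.ext h1 h2
  refine ⟨(Finset.Ico (0:ℤ) R ×ˢ Finset.Ico (0:ℤ) L).image e,
    (Finset.Ico (c:ℤ) (R - c) ×ˢ Finset.Ico (J:ℤ) (L - J)).image e, ?_, ?_, 4 * J * c, ?_, ?_, ?_⟩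
  · apply Finset.image_subset_image
    apply Finset.product_subset_product
    · intro x hx
      rw [Finset.mem_Ico] at hx ⊢
      omega
    · intro x hx
      rw [Finset.mem_Ico] at hx ⊢
      omega
  · intro x hx s hs
    rw [Finset.mem_image] at hx ⊢
    obtain ⟨⟨a, i⟩, hai, rfl⟩ := hx
    simp only [Finset.mem_product, Finset.mem_Ico] at hai
    obtain ⟨⟨ha1, ha2⟩, hi1, hi2⟩ := hai
    have hj := abs_le.mp (hjJ s hs)
    obtain ⟨n, rfl⟩ : ∃ n : ℕ, i = n := ⟨i.toNat, by omega⟩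
    have hb : |k s * (N : ℤ) ^ n| ≤ c := by
      rw [abs_mul, hc, mul_comm]
      push_cast
      have h1 : |(N : ℤ) ^ n| ≤ (N : ℤ) ^ L := by
        rw [abs_of_nonneg (by positivity)]
        exact pow_le_pow_right₀ (by omega) (by omega)
      exact mul_le_mul h1 (hkκ s hs) (abs_nonneg _) (by positivity)
    have hb' := abs_le.mp hb
    refine ⟨(a + k s * (N : ℤ) ^ n, n + j s), ?_, ?_⟩
    · simp only [Finset.mem_product, Finset.mem_Ico]
      omega
    · conv_rhs => rw [hkj s hs]
      simp only [he]
      rw [← tM_add, zpow_add, zpow_natCast]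
      have := u_tM (N := N) M n (k s)
      calc _ = tM N M a * (tM N M (k s * (N : ℤ) ^ n) * BS.u N ^ n) * BS.u N ^ j s := by
            simp only [mul_assoc]
        _ = _ := by rw [← this]; simp only [mul_assoc]
  · positivity
  · rw [Finset.card_image_of_injective _ hinj, Finset.card_product]
    simp only [Int.card_Ico, sub_zero, Int.toNat_natCast]
    rw [hR, hL]; ring
  · rw [Finset.card_image_of_injective _ hinj, Finset.card_product]
    simp only [Int.card_Ico]
    have h1 : ((R : ℤ) - c - c).toNat = 2 * c * (q - 1) := by
      rw [hR]; zify [hq]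
      have : (0:ℤ) ≤ 2 * c * (q - 1) := by
        have : (1:ℤ) ≤ q := by exact_mod_cast hq
        have : (0:ℤ) ≤ (q:ℤ) - 1 := by linarith
        positivity
      rw [Int.toNat_of_nonneg] <;> linarith
    have h2 : ((L : ℤ) - J - J).toNat = 2 * J * (q - 1) := by
      rw [hL]; zify [hq]
      have : (0:ℤ) ≤ 2 * J * (q - 1) := by
        have : (1:ℤ) ≤ q := by exact_mod_cast hq
        have : (0:ℤ) ≤ (q:ℤ) - 1 := by linarith
        positivity
      rw [Int.toNat_of_nonneg] <;> linarith
    rw [h1, h2]; ring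

/-- Conjugating a finite set into `u^j t^k`. -/
theorem conj_form (S : Finset (BS N)) : ∃ n : ℕ, ∀ g ∈ S, ∃ j k : ℤ,
    BS.u N ^ n * g * (BS.u N ^ n)⁻¹ = BS.u N ^ j * BS.t N ^ k := by
  classical
  obtain ⟨M, hM⟩ := normal_form_finset (S.image (fun g => g⁻¹))
  refine ⟨M, fun g hg => ?_⟩
  obtain ⟨k, j, h⟩ := hM M le_rfl g⁻¹ (Finset.mem_image_of_mem _ hg)
  refine ⟨-j, -k, ?_⟩
  have hg : g = (BS.u N ^ j)⁻¹ * tM N M (-k) := by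
    rw [← tM_inv, ← mul_inv_rev, ← h, inv_inv]
  rw [hg, tM]
  have hc : BS.u N ^ M * (BS.u N ^ j)⁻¹ = (BS.u N ^ j)⁻¹ * BS.u N ^ M := by
    have := ((Commute.refl (BS.u N)).pow_left M).zpow_right j
    exact this.inv_right
  rw [zpow_neg (BS.u N)]
  calc _ = (BS.u N ^ M * (BS.u N ^ j)⁻¹) * (BS.u N ^ M)⁻¹ * BS.t N ^ (-k) * (BS.u N ^ M * (BS.u N ^ M)⁻¹) := by
        simp only [mul_assoc]
    _ = _ := by rw [hc]; simp only [mul_assoc, mul_inv_cancel, mul_one, mul_inv_cancel_left]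

end grp
end BSProof

namespace BSProof

open Topology
open scoped ENNReal

section weak

variable {G : Type*} [Group G]

/-- the Hilbert space `ℓ²(G)` -/
noncomputable abbrev L2 (G : Type*) := lp (fun _ : G => ℂ) 2

lemma norm_ev_sq {X K : Type*} [NormedAddCommGroup K] [InnerProductSpace ℂ K] (f : X → K) (S : Finset X)
    (hf : ∀ x ∈ S, ∀ y ∈ S, x ≠ y → inner ℂ (f x) (f y) = 0) (hf1 : ∀ x ∈ S, ‖f x‖ = 1)
    (b : X →₀ ℂ) (hb : b.support ⊆ S) : ‖ev f b‖ ^ 2 = ∑ x ∈ S, ‖b x‖ ^ 2 := by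
  classical
  have h1 : ev f b = ∑ x ∈ S, b x • f x := by
    rw [ev_eq]
    apply Finset.sum_subset hb
    intro x _ hx
    rw [Finsupp.notMem_support_iff.mp hx, zero_smul]
  have h2 : (inner ℂ (ev f b) (ev f b) : ℂ) = ((∑ x ∈ S, ‖b x‖ ^ 2 : ℝ) : ℂ) := by
    rw [h1, sum_inner, Complex.ofReal_sum]
    apply Finset.sum_congr rfl
    intro x hx
    rw [inner_sum, Finset.sum_eq_single x]
    · rw [inner_smul_left, inner_smul_right, inner_self_eq_norm_sq_to_K, hf1 x hx]
      simp [← Complex.conj_mul']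
    · intro y hy hyx
      rw [inner_smul_left, inner_smul_right, hf x hx y hy (Ne.symm hyx)]; simp
    · intro h; exact absurd hx h
  rw [inner_self_eq_norm_sq_to_K] at h2
  exact Complex.ofReal_injective (by simpa using h2)

/-- basis vectors -/
noncomputable def dl (X : Type*) (x : X) : L2 X := by
  classical exact lp.single 2 x (1 : ℂ)

lemma dl_self {X : Type*} (x : X) : (dl X x : ∀ _ : X, ℂ) x = 1 := by
  classical
  unfold dl
  rw [lp.single_apply, Pi.single_eq_same]

lemma dl_ne {X : Type*} (x y : X) (h : y ≠ x) : (dl X x : ∀ _ : X, ℂ) y = 0 := by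
  classical
  unfold dl
  rw [lp.single_apply, Pi.single_eq_of_ne h]

lemma dl_apply {X : Type*} [DecidableEq X] (x y : X) : (dl X x : ∀ _ : X, ℂ) y = if y = x then 1 else 0 := by
  split_ifs with h
  · rw [h, dl_self]
  · exact dl_ne x y h

lemma dl_norm {X : Type*} (x : X) : ‖dl X x‖ = 1 := by
  classical
  unfold dl
  rw [lp.norm_single (by norm_num)]; simp

lemma inner_dl {X : Type*} (x : X) (f : L2 X) : inner ℂ (dl X x) f = (f : ∀ _ : X, ℂ) x := by
  classical
  unfold dl
  rw [lp.inner_single_left]; simp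

lemma dl_ortho {X : Type*} (x y : X) (h : x ≠ y) : inner ℂ (dl X x) (dl X y) = 0 := by
  classical
  rw [inner_dl, dl_apply, if_neg h]

lemma ev_dl_apply {X : Type*} (b : X →₀ ℂ) (x : X) : ((ev (dl X) b : L2 X) : ∀ _ : X, ℂ) x = b x := by
  classical
  rw [ev_eq, lp.coeFn_sum, Finset.sum_apply]
  simp only [lp.coeFn_smul, Pi.smul_apply, dl_apply, smul_eq_mul, mul_ite, mul_one, mul_zero]
  rw [Finset.sum_ite_eq]
  split_ifs with h
  · rfl
  · exact (Finsupp.notMem_support_iff.mp h).symm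

lemma dense_ev {X : Type*} : Dense (Set.range (ev (dl X))) := by
  classical
  intro f
  have := lp.hasSum_single (E := fun _ : X => ℂ) (p := 2) (by norm_num) f
  refine mem_closure_of_tendsto this (Filter.Eventually.of_forall fun s => ?_)
  refine ⟨Finsupp.onFinset s (fun x => if x ∈ s then (f : ∀ _ : X, ℂ) x else 0) (by intro x hx; by_contra h; simp [h] at hx), ?_⟩
  apply lp.ext
  funext y
  rw [ev_dl_apply, lp.coeFn_sum, Finset.sum_apply]
  simp [lp.single_apply, Pi.single_apply]

/-- operators bounded by checking on finitely supported vectors -/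
lemma opNorm_le_of_ev {X : Type*} {K : Type*} [NormedAddCommGroup K] [NormedSpace ℂ K] (A : L2 X →L[ℂ] K) (C : ℝ) (hC : 0 ≤ C)
    (h : ∀ b : X →₀ ℂ, ‖A (ev (dl X) b)‖ ≤ C * ‖ev (dl X) b‖) : ‖A‖ ≤ C := by
  apply A.opNorm_le_bound hC
  intro f
  have hc : IsClosed {f : L2 X | ‖A f‖ ≤ C * ‖f‖} := isClosed_le (by fun_prop) (by fun_prop)
  have : closure (Set.range (ev (dl X))) ⊆ {f : L2 X | ‖A f‖ ≤ C * ‖f‖} := by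
    apply closure_minimal _ hc
    rintro _ ⟨b, rfl⟩
    exact h b
  exact this (dense_ev f)

lemma ev_apply {K K' : Type*} [NormedAddCommGroup K] [NormedSpace ℂ K] [NormedAddCommGroup K'] [NormedSpace ℂ K'] {X : Type*}
    (f : X → K →L[ℂ] K') (a : X →₀ ℂ) (v : K) :
    ev f a v = ∑ g ∈ a.support, a g • f g v := by
  rw [ev_eq, sum_apply]; rfl

lemma conv_key {K : Type*} [NormedAddCommGroup K] [NormedSpace ℂ K] (τ : G → K →L[ℂ] K) (D : G → K)
    (hD : ∀ g x, τ g (D x) = D (x * g⁻¹)) (a b : G →₀ ℂ) :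
    ev τ a (ev D b) = ev D (∑ g ∈ a.support, a g • b.mapDomain (fun x => x * g⁻¹)) := by
  rw [ev_apply]
  conv_rhs => rw [ev, map_sum]
  apply Finset.sum_congr rfl
  intro g _
  rw [map_smul, Finsupp.linearCombination_mapDomain, ev_eq, map_sum, Finsupp.linearCombination_apply, Finsupp.sum]
  congr 1
  apply Finset.sum_congr rfl
  intro x _
  rw [map_smul, hD]; rfl

theorem rho_le (ρ : G → L2 G →L[ℂ] L2 G) (hρ : ∀ g f x, (ρ g f : ∀ _ : G, ℂ) x = (f : ∀ _ : G, ℂ) (x * g))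
    {K : Type*} [NormedAddCommGroup K] [InnerProductSpace ℂ K] [CompleteSpace K] (σ : G → K →L[ℂ] K) (hσ : IsRep σ)
    (hv : ∀ S : Finset G, ∃ v : K, (∀ x ∈ S, ∀ y ∈ S, x ≠ y → inner ℂ (σ x v) (σ y v) = 0) ∧ ∀ x ∈ S, ‖σ x v‖ = 1)
    (a : G →₀ ℂ) : ‖ev ρ a‖ ≤ ‖ev σ a‖ := by
  classical
  apply opNorm_le_of_ev _ _ (norm_nonneg _)
  intro b
  set ab : G →₀ ℂ := ∑ g ∈ a.support, a g • b.mapDomain (fun x => x * g⁻¹) with hab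
  set S : Finset G := b.support ∪ ab.support with hS
  obtain ⟨v, hv1, hv2⟩ := hv (S.image (fun x => x⁻¹))
  set J : G → K := fun x => σ x⁻¹ v with hJ
  have hJ1 : ∀ x ∈ S, ∀ y ∈ S, x ≠ y → inner ℂ (J x) (J y) = 0 := fun x hx y hy hxy =>
    hv1 _ (Finset.mem_image_of_mem _ hx) _ (Finset.mem_image_of_mem _ hy) (by simpa using hxy)
  have hJ2 : ∀ x ∈ S, ‖J x‖ = 1 := fun x hx => hv2 _ (Finset.mem_image_of_mem _ hx)
  have heq : ∀ c : G →₀ ℂ, c.support ⊆ S → ‖ev (dl G) c‖ = ‖ev J c‖ := by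
    intro c hc
    have e1 := norm_ev_sq J S hJ1 hJ2 c hc
    have e2 := norm_ev_sq (dl G) S (fun x _ y _ h => dl_ortho x y h) (fun x _ => dl_norm x) c hc
    rw [← e1] at e2
    exact (sq_eq_sq₀ (norm_nonneg _) (norm_nonneg _)).mp e2
  have hρd : ∀ g x, ρ g (dl G x) = dl G (x * g⁻¹) := by
    intro g x
    apply lp.ext; funext y
    rw [hρ, dl_apply, dl_apply]
    simp [eq_mul_inv_iff_mul_eq]
  have hσJ : ∀ g x, σ g (J x) = J (x * g⁻¹) := by
    intro g x
    simp only [hJ]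
    rw [mul_inv_rev, inv_inv, hσ.mul]; rfl
  rw [conv_key ρ (dl G) hρd a b, ← hab, heq ab Finset.subset_union_right, heq b Finset.subset_union_left, hab, ← conv_key σ J hσJ]
  exact ContinuousLinearMap.le_opNorm _ _

lemma amplify (ρ : G → L2 G →L[ℂ] L2 G) (hρ : ∀ g f x, (ρ g f : ∀ _ : G, ℂ) x = (f : ∀ _ : G, ℂ) (x * g))
    {E : Type*} [NormedAddCommGroup E] [InnerProductSpace ℂ E] [FiniteDimensional ℂ E] (a : G →₀ ℂ)
    (F F' : Finset G) (Ξ : G → E) (hΞ : ∀ x ∉ F, Ξ x = 0) :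
    ∑ x ∈ F', ‖∑ g ∈ a.support, a g • Ξ (x * g)‖ ^ 2 ≤ ‖ev ρ a‖ ^ 2 * ∑ x ∈ F, ‖Ξ x‖ ^ 2 := by
  classical
  set e := stdOrthonormalBasis ℂ E with he
  have hpar : ∀ v : E, ‖v‖ ^ 2 = ∑ i, ‖inner ℂ (e i) v‖ ^ 2 := fun v => (e.sum_sq_norm_inner_right v).symm
  simp only [hpar]
  rw [Finset.sum_comm, Finset.sum_comm (s := F), Finset.mul_sum]
  apply Finset.sum_le_sum
  intro i _
  set c : G →₀ ℂ := Finsupp.onFinset F (fun x => inner ℂ (e i) (Ξ x)) (by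
    intro x hx; by_contra h; rw [hΞ x h] at hx; simp at hx) with hc
  have hcx : ∀ x, c x = inner ℂ (e i) (Ξ x) := fun x => rfl
  have h1 := norm_ev_sq (dl G) F (fun x _ y _ h => dl_ortho x y h) (fun x _ => dl_norm x) c Finsupp.support_onFinset_subset
  have h2 : ∀ x, inner ℂ (e i) (∑ g ∈ a.support, a g • Ξ (x * g)) = (ev ρ a (ev (dl G) c) : ∀ _ : G, ℂ) x := by
    intro x
    rw [ev_apply, lp.coeFn_sum, Finset.sum_apply, inner_sum]
    apply Finset.sum_congr rfl
    intro g _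
    rw [lp.coeFn_smul, Pi.smul_apply, hρ, ev_dl_apply, inner_smul_right, hcx, smul_eq_mul]
  simp only [h2, ← hcx]
  rw [← h1, ← mul_pow]
  have h3 : ∑ x ∈ F', ‖(ev ρ a (ev (dl G) c) : ∀ _ : G, ℂ) x‖ ^ 2 ≤ ‖ev ρ a (ev (dl G) c)‖ ^ 2 := by
    have := lp.sum_rpow_le_norm_rpow (p := 2) (by norm_num) (ev ρ a (ev (dl G) c)) F'
    simpa using this
  refine h3.trans ?_
  gcongr
  exact ContinuousLinearMap.le_opNorm _ _

theorem le_rho (ρ : G → L2 G →L[ℂ] L2 G) (hρ : ∀ g f x, (ρ g f : ∀ _ : G, ℂ) x = (f : ∀ _ : G, ℂ) (x * g))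
    (hfol : ∀ (S : Finset G) (q : ℕ) (_ : 1 ≤ q), ∃ F F' : Finset G, F' ⊆ F ∧ (∀ x ∈ F', ∀ s ∈ S, x * s ∈ F) ∧ 
      ∃ c : ℕ, 0 < c ∧ F.card = c * q ^ 2 ∧ F'.card = c * (q - 1) ^ 2)
    {K : Type*} [NormedAddCommGroup K] [InnerProductSpace ℂ K] [CompleteSpace K] (σ : G → K →L[ℂ] K) (hσ : IsRep σ)
    (a : G →₀ ℂ) : ‖ev σ a‖ ≤ ‖ev ρ a‖ := by
  classical
  apply ContinuousLinearMap.opNorm_le_bound _ (norm_nonneg _)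
  intro ξ
  have hiso : ∀ g v, ‖σ g v‖ = ‖v‖ := by
    intro g v
    have h1 : star (σ g) * σ g = 1 := by rw [hσ.star, ← hσ.mul, inv_mul_cancel, hσ.one]
    have h2 : inner ℂ (σ g v) (σ g v) = inner ℂ v v := by
      rw [← ContinuousLinearMap.adjoint_inner_right, ← ContinuousLinearMap.star_eq_adjoint,
        ← mul_apply_eq_comp, h1]; rfl
    rw [inner_self_eq_norm_sq_to_K, inner_self_eq_norm_sq_to_K] at h2
    have h3 : ‖σ g v‖ ^ 2 = ‖v‖ ^ 2 := by exact_mod_cast h2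
    exact (sq_eq_sq₀ (norm_nonneg _) (norm_nonneg _)).mp h3
  have main : ∀ q : ℕ, (q : ℝ) * ‖ev σ a ξ‖ ≤ ‖ev ρ a‖ * ‖ξ‖ * (q + 1) := by
    intro q
    obtain ⟨F, F', hFF, hS, c, hc, h1, h2⟩ := hfol a.support (q + 1) (by omega)
    set E : Submodule ℂ K := Submodule.span ℂ ((F.image (fun x => σ x ξ) : Finset K) : Set K) with hE
    set Ξ : G → E := fun x => if h : x ∈ F then ⟨σ x ξ, Submodule.subset_span (by
      exact_mod_cast Finset.mem_image_of_mem _ h)⟩ else 0 with hΞ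
    have := amplify ρ hρ a F F' Ξ (fun x hx => by simp [hΞ, hx])
    have e1 : ∑ x ∈ F, ‖Ξ x‖ ^ 2 = F.card * ‖ξ‖ ^ 2 := by
      rw [← nsmul_eq_mul, ← Finset.sum_const]
      apply Finset.sum_congr rfl
      intro x hx
      simp only [hΞ, hx, dif_pos]
      rw [← Submodule.norm_coe, hiso]
    have e2 : ∑ x ∈ F', ‖∑ g ∈ a.support, a g • Ξ (x * g)‖ ^ 2 = F'.card * ‖ev σ a ξ‖ ^ 2 := by
      rw [← nsmul_eq_mul, ← Finset.sum_const]
      apply Finset.sum_congr rfl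
      intro x hx
      rw [← hiso x, ev_apply, map_sum, ← Submodule.norm_coe, Submodule.coe_sum]
      congr 2
      apply Finset.sum_congr rfl
      intro g hg
      have := hS x hx g hg
      rw [Submodule.coe_smul]
      simp only [hΞ, this, dif_pos, hσ.mul, map_smul, mul_apply_eq_comp]
    rw [e1, e2, h1, h2] at this
    simp only [Nat.add_sub_cancel] at this
    push_cast at this
    have hc' : (0:ℝ) < c := by exact_mod_cast hc
    have h4 : (q * ‖ev σ a ξ‖) ^ 2 ≤ (‖ev ρ a‖ * ‖ξ‖ * (q + 1)) ^ 2 := by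
      refine le_of_mul_le_mul_left ?_ hc'
      nlinarith
    exact le_of_sq_le_sq h4 (by positivity)
  by_contra hcon
  push Not at hcon
  obtain ⟨q, hq⟩ := exists_nat_gt (‖ev ρ a‖ * ‖ξ‖ / (‖ev σ a ξ‖ - ‖ev ρ a‖ * ‖ξ‖))
  rw [div_lt_iff₀ (by linarith)] at hq
  have := main q
  nlinarith

end weak
end BSProof

namespace BSProof

open Topology
open scoped ENNReal

section wshift

/-- comparison with a shifted sequence -/
lemma memlp_shift (f : L2 ℤ) (g : ℤ → ℂ) (C : ℝ) (hC : 0 ≤ C) (j : ℤ)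
    (h : ∀ n, ‖g n‖ ≤ C * ‖(f : ∀ _ : ℤ, ℂ) (n + j)‖) : Memℓp g 2 := by
  have hs := (memℓp_gen_iff (p := 2) (by norm_num)).mp (lp.memℓp f)
  rw [memℓp_gen_iff (by norm_num)]
  simp only [ENNReal.toReal_ofNat, Real.rpow_ofNat] at hs ⊢
  have hs2 : Summable (fun n => C ^ 2 * ‖(f : ∀ _ : ℤ, ℂ) (n + j)‖ ^ 2) :=
    ((Equiv.addRight j).summable_iff.mpr hs).mul_left _
  refine Summable.of_nonneg_of_le (fun n => by positivity) (fun n => ?_) hs2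
  rw [← mul_pow]
  exact pow_le_pow_left₀ (norm_nonneg _) (h n) 2

lemma norm_shift_le (f g : L2 ℤ) (C : ℝ) (hC : 0 ≤ C) (j : ℤ)
    (h : ∀ n, ‖(g : ∀ _ : ℤ, ℂ) n‖ ≤ C * ‖(f : ∀ _ : ℤ, ℂ) (n + j)‖) : ‖g‖ ≤ C * ‖f‖ := by
  have hs := (memℓp_gen_iff (p := 2) (by norm_num)).mp (lp.memℓp f)
  have hs' := (memℓp_gen_iff (p := 2) (by norm_num)).mp (lp.memℓp g)
  have e1 := lp.norm_rpow_eq_tsum (p := 2) (by norm_num) f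
  have e2 := lp.norm_rpow_eq_tsum (p := 2) (by norm_num) g
  simp only [ENNReal.toReal_ofNat, Real.rpow_ofNat] at hs hs' e1 e2
  have hs2 : Summable (fun n => C ^ 2 * ‖(f : ∀ _ : ℤ, ℂ) (n + j)‖ ^ 2) :=
    ((Equiv.addRight j).summable_iff.mpr hs).mul_left _
  have e3 : ∑' n, C ^ 2 * ‖(f : ∀ _ : ℤ, ℂ) (n + j)‖ ^ 2 = C ^ 2 * ‖f‖ ^ 2 := by
    rw [tsum_mul_left, e1]
    congr 1
    exact (Equiv.addRight j).tsum_eq (fun n => ‖(f : ∀ _ : ℤ, ℂ) n‖ ^ 2)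
  have : ‖g‖ ^ 2 ≤ (C * ‖f‖) ^ 2 := by
    rw [mul_pow, ← e3, e2]
    refine hs'.tsum_le_tsum (fun n => ?_) hs2
    rw [← mul_pow]
    exact pow_le_pow_left₀ (norm_nonneg _) (h n) 2
  exact le_of_sq_le_sq this (by positivity)

/-- `e(θ) = exp(2πiθ)` -/
noncomputable def ex (θ : ℝ) : ℂ := Complex.exp ((2 * Real.pi * θ : ℝ) * Complex.I)

lemma ex_norm (θ : ℝ) : ‖ex θ‖ = 1 := Complex.norm_exp_ofReal_mul_I _

lemma ex_add (θ η : ℝ) : ex (θ + η) = ex θ * ex η := by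
  rw [ex, ex, ex, ← Complex.exp_add]; congr 1; push_cast; ring

lemma ex_zero : ex 0 = 1 := by simp [ex]

lemma ex_int (k : ℤ) : ex k = 1 := by
  rw [ex, Complex.exp_eq_one_iff]
  exact ⟨k, by push_cast; ring⟩

lemma ex_eq_one {θ : ℝ} (h : ex θ = 1) : ∃ k : ℤ, θ = k := by
  rw [ex, Complex.exp_eq_one_iff] at h
  obtain ⟨n, hn⟩ := h
  refine ⟨n, ?_⟩
  have h1 : (2 * Real.pi * Complex.I) ≠ 0 := Complex.two_pi_I_ne_zero
  have h2 : (2 * Real.pi * Complex.I) * (θ : ℂ) = (2 * Real.pi * Complex.I) * ((n : ℝ) : ℂ) := by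
    push_cast at hn ⊢; linear_combination hn
  exact Complex.ofReal_injective (mul_left_cancel₀ h1 h2)

lemma ex_sub_one_le (θ : ℝ) : ‖ex θ - 1‖ ≤ 2 * Real.pi * |θ| := by
  rw [ex, mul_comm]
  refine (Real.norm_exp_I_mul_ofReal_sub_one_le).trans ?_
  rw [Real.norm_eq_abs, abs_mul, abs_of_pos (by positivity)]

lemma ex_nsmul (θ : ℝ) (s : ℕ) : ex (s * θ) = ex θ ^ s := by
  induction s with
  | zero => simp [ex_zero]
  | succ n ih => rw [pow_succ, ← ih, ← ex_add]; congr 1; push_cast; ring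

/-- weighted shift -/
noncomputable def wsh (m : ℤ → ℂ) (hm : ∀ n, ‖m n‖ = 1) (j : ℤ) : L2 ℤ →L[ℂ] L2 ℤ :=
  LinearMap.mkContinuous
    { toFun := fun f => ⟨fun n => m n * (f : ∀ _ : ℤ, ℂ) (n + j), memlp_shift f _ 1 zero_le_one j
        (fun n => by simp [hm])⟩
      map_add' := fun f g => by
        apply lp.ext; funext n
        change m n * ((f + g : L2 ℤ) : ∀ _ : ℤ, ℂ) (n + j) = m n * _ + m n * _
        rw [lp.coeFn_add, Pi.add_apply, mul_add]
      map_smul' := fun c f => by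
        apply lp.ext; funext n
        change m n * ((c • f : L2 ℤ) : ∀ _ : ℤ, ℂ) (n + j) = c * (m n * _)
        rw [lp.coeFn_smul, Pi.smul_apply, smul_eq_mul]; ring } 1
    (fun f => norm_shift_le f _ 1 zero_le_one j (fun n => by simp [hm]))

lemma wsh_apply (m : ℤ → ℂ) (hm : ∀ n, ‖m n‖ = 1) (j : ℤ) (f : L2 ℤ) (n : ℤ) :
    (wsh m hm j f : ∀ _ : ℤ, ℂ) n = m n * (f : ∀ _ : ℤ, ℂ) (n + j) := rfl

lemma wsh_norm (m : ℤ → ℂ) (hm : ∀ n, ‖m n‖ = 1) (j : ℤ) (f : L2 ℤ) : ‖wsh m hm j f‖ = ‖f‖ := by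
  apply le_antisymm
  · have := norm_shift_le f (wsh m hm j f) 1 zero_le_one j (fun n => by rw [wsh_apply]; simp [hm])
    simpa using this
  · have := norm_shift_le (wsh m hm j f) f 1 zero_le_one (-j) (fun n => by rw [wsh_apply]; simp [hm])
    simpa using this

variable {N : ℕ} (hN : 2 ≤ N)

/-- the representation on `ℓ²(ℤ)` attached to `x` -/
noncomputable def Vr (x : ℝ) (g : BS N) : L2 ℤ →L[ℂ] L2 ℤ :=
  wsh (fun n => ex ((N : ℝ) ^ n * rr hN g * x)) (fun _ => ex_norm _) (jj g)

lemma Vr_apply (x : ℝ) (g : BS N) (f : L2 ℤ) (n : ℤ) :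
    (Vr hN x g f : ∀ _ : ℤ, ℂ) n = ex ((N : ℝ) ^ n * rr hN g * x) * (f : ∀ _ : ℤ, ℂ) (n + jj g) := rfl

lemma Vr_rep (x : ℝ) : IsRep (Vr hN x) := by
  have hN0 : (N : ℝ) ≠ 0 := by positivity
  have h1 : Vr hN x 1 = 1 := by
    ext f n
    rw [Vr_apply, rr_one, jj_one]; simp [ex_zero]
  have hm : ∀ g h, Vr hN x (g * h) = Vr hN x g * Vr hN x h := by
    intro g h
    ext f n
    rw [mul_apply_eq_comp, Vr_apply, Vr_apply, Vr_apply, rr_mul, jj_mul, ← mul_assoc, ← ex_add, add_assoc,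
      zpow_add₀ hN0]
    congr 2; ring
  refine ⟨h1, hm, fun g => ?_⟩
  have h2 : star (Vr hN x g) * Vr hN x g = 1 := by
    rw [ContinuousLinearMap.star_eq_adjoint]
    exact (ContinuousLinearMap.norm_map_iff_adjoint_comp_self _).mp (fun f => wsh_norm _ _ _ f)
  calc star (Vr hN x g) = star (Vr hN x g) * (Vr hN x g * Vr hN x g⁻¹) := by
        rw [← hm, mul_inv_cancel, h1, mul_one]
    _ = Vr hN x g⁻¹ := by rw [← mul_assoc, h2, one_mul]

lemma coef_bound {a : BS N →₀ ℂ} (c : BS N → ℤ → ℂ) (f F : L2 ℤ) (C : ℝ) (hC : 0 ≤ C)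
    (hF : ∀ n, (F : ∀ _ : ℤ, ℂ) n = ∑ g ∈ a.support, a g * (c g n * (f : ∀ _ : ℤ, ℂ) (n + jj g)))
    (hc : ∀ g ∈ a.support, ∀ n, ‖c g n * (f : ∀ _ : ℤ, ℂ) (n + jj g)‖ ≤ C * ‖(f : ∀ _ : ℤ, ℂ) (n + jj g)‖) :
    ‖F‖ ≤ (∑ g ∈ a.support, ‖a g‖) * C * ‖f‖ := by
  classical
  have hex : ∀ g ∈ a.support, ∃ T : L2 ℤ, (∀ n, (T : ∀ _ : ℤ, ℂ) n = c g n * (f : ∀ _ : ℤ, ℂ) (n + jj g)) ∧ ‖T‖ ≤ C * ‖f‖ := by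
    intro g hg
    refine ⟨⟨_, memlp_shift f _ C hC (jj g) (hc g hg)⟩, fun n => rfl, ?_⟩
    exact norm_shift_le f _ C hC (jj g) (hc g hg)
  choose! T hT1 hT2 using hex
  have : F = ∑ g ∈ a.support, a g • T g := by
    apply lp.ext; funext n
    rw [hF, lp.coeFn_sum, Finset.sum_apply]
    apply Finset.sum_congr rfl
    intro g hg
    rw [lp.coeFn_smul, Pi.smul_apply, hT1 g hg, smul_eq_mul]
  rw [this, mul_assoc, Finset.sum_mul]
  refine (norm_sum_le _ _).trans (Finset.sum_le_sum fun g hg => ?_)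
  rw [norm_smul]
  gcongr
  exact hT2 g hg

lemma evVr_apply (x : ℝ) (a : BS N →₀ ℂ) (f : L2 ℤ) (n : ℤ) : (ev (Vr hN x) a f : ∀ _ : ℤ, ℂ) n =
    ∑ g ∈ a.support, a g * (ex ((N : ℝ) ^ n * rr hN g * x) * (f : ∀ _ : ℤ, ℂ) (n + jj g)) := by
  rw [ev_apply, lp.coeFn_sum, Finset.sum_apply]
  apply Finset.sum_congr rfl
  intro g _
  rw [lp.coeFn_smul, Pi.smul_apply, Vr_apply, smul_eq_mul]

end wshift
end BSProof

namespace BSProof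

open Topology
open scoped ENNReal

section fam

variable {N : ℕ} (hN : 2 ≤ N)

/-- elements of `ℤ[1/N]` -/
def ZN (N : ℕ) (y : ℝ) : Prop := ∃ (k : ℤ) (J : ℕ), y = k / (N : ℝ) ^ J

lemma ZN_add {y z : ℝ} (hN : 2 ≤ N) (hy : ZN N y) (hz : ZN N z) : ZN N (y + z) := by
  obtain ⟨k, J, rfl⟩ := hy
  obtain ⟨l, I, rfl⟩ := hz
  have hN0 : (N : ℝ) ≠ 0 := by positivity
  refine ⟨k * (N : ℤ) ^ I + l * (N : ℤ) ^ J, J + I, ?_⟩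
  push_cast
  rw [pow_add]
  field_simp

lemma ZN_zero : ZN N 0 := ⟨0, 0, by simp⟩

lemma ZN_neg {y : ℝ} (hy : ZN N y) : ZN N (-y) := by
  obtain ⟨k, J, rfl⟩ := hy
  exact ⟨-k, J, by push_cast; ring⟩

lemma ZN_mul_div {y : ℝ} (hy : ZN N y) (m : ℕ) (J' : ℕ) : ZN N (m * (y / (N : ℝ) ^ J')) := by
  obtain ⟨k, J, rfl⟩ := hy
  exact ⟨m * k, J + J', by push_cast; rw [pow_add]; ring⟩

lemma rr_ZN (S : Finset (BS N)) : ∃ M : ℕ, ∀ g ∈ S, ∃ k : ℤ, rr hN g = k / (N : ℝ) ^ M := by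
  obtain ⟨M, hM⟩ := normal_form_finset S
  refine ⟨M, fun g hg => ?_⟩
  obtain ⟨k, j, rfl⟩ := hM M le_rfl g hg
  exact ⟨k, rr_tM hN M k j⟩

lemma ex_eventually (S : Finset (BS N)) {y : ℝ} (hy : ZN N y) : ∃ n0 : ℕ, ∀ g ∈ S, ∀ n : ℤ, n0 ≤ n →
    ex ((N : ℝ) ^ n * rr hN g * y) = 1 := by
  obtain ⟨M, hM⟩ := rr_ZN hN S
  obtain ⟨l, J, rfl⟩ := hy
  have hN0 : (N : ℝ) ≠ 0 := by positivity
  refine ⟨M + J, fun g hg n hn => ?_⟩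
  obtain ⟨k, hk⟩ := hM g hg
  obtain ⟨i, rfl⟩ : ∃ i : ℕ, n = ((M + J + i : ℕ) : ℤ) := ⟨(n - (M + J)).toNat, by push_cast at hn ⊢; omega⟩
  have : (N : ℝ) ^ ((M + J + i : ℕ) : ℤ) * rr hN g * (l / (N : ℝ) ^ J) = ((N ^ i * k * l : ℤ) : ℝ) := by
    rw [hk, zpow_natCast, pow_add, pow_add]
    push_cast
    field_simp
  rw [this, ex_int]

lemma bound_exists (S : Finset (BS N)) : ∃ R : ℝ, 0 ≤ R ∧ ∀ g ∈ S, |rr hN g| ≤ R :=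
  ⟨∑ g ∈ S, |rr hN g|, by positivity, fun g hg => Finset.single_le_sum (f := fun g => |rr hN g|) (fun _ _ => abs_nonneg _) hg⟩

variable {q : ℝ → L2 ℤ →L[ℂ] L2 ℤ}

/-- window coordinates -/
noncomputable def bt (W : ℕ) : L2 ℤ →ₗ[ℂ] (Fin (2 * W + 1) → ℂ) where
  toFun v := fun i => (v : ∀ _ : ℤ, ℂ) ((i : ℕ) - W)
  map_add' v w := by funext i; simp
  map_smul' c v := by funext i; simp

lemma bt_zero (W : ℕ) (v : L2 ℤ) (h : bt W v = 0) (i : ℤ) (h1 : -W ≤ i) (h2 : i ≤ W) : (v : ∀ _ : ℤ, ℂ) i = 0 := by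
  have := congrFun h ⟨(i + W).toNat, by omega⟩
  simp only [bt, LinearMap.coe_mk, AddHom.coe_mk, Pi.zero_apply] at this
  rwa [show (((i + W).toNat : ℕ) : ℤ) - W = i by omega] at this

lemma window (happ : ∀ ε : ℝ, 0 < ε → ∃ a : BS N →₀ ℂ, ∀ x, ‖q x - ev (Vr hN x) a‖ ≤ ε)
    {y : ℝ} (hy : ZN N y) : ∃ W : ℕ, ∀ x v, bt W v = 0 → ‖q (x + y) v - q x v‖ ≤ 1 / 4 * ‖v‖ := by
  obtain ⟨a, ha⟩ := happ (1 / 16) (by norm_num)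
  obtain ⟨n0, hn0⟩ := ex_eventually hN a.support hy
  obtain ⟨R, hR0, hR⟩ := bound_exists hN a.support
  set A := ∑ g ∈ a.support, ‖a g‖ with hA
  have hA0 : 0 ≤ A := by positivity
  have hN1 : (1 : ℝ) < N := by exact_mod_cast (by omega : 1 < N)
  set η : ℝ := 1 / (8 * (A + 1)) with hη
  have hη0 : 0 < η := by positivity
  obtain ⟨L, hL⟩ := exists_pow_lt_of_lt_one (show 0 < η / (2 * Real.pi * R * |y| + 1) by positivity)
    (show ((N : ℝ)⁻¹) < 1 from inv_lt_one_of_one_lt₀ hN1)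
  set Jm : ℕ := a.support.sup (fun g => (jj g).natAbs) with hJm
  have hJ : ∀ g ∈ a.support, (jj g).natAbs ≤ Jm := fun g hg => Finset.le_sup (f := fun g : BS N => (jj g).natAbs) hg
  refine ⟨n0 + L + Jm, fun x v hv => ?_⟩
  have hD : ‖(ev (Vr hN (x + y)) a v - ev (Vr hN x) a v)‖ ≤ A * η * ‖v‖ := by
    apply coef_bound (a := a) (fun g n => ex ((N : ℝ) ^ n * rr hN g * (x + y)) - ex ((N : ℝ) ^ n * rr hN g * x)) v _ η hη0.le
    · intro n
      rw [lp.coeFn_sub, Pi.sub_apply, evVr_apply, evVr_apply, ← Finset.sum_sub_distrib]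
      apply Finset.sum_congr rfl
      intro g _; ring
    · intro g hg n
      rw [norm_mul]
      have e1 : ex ((N : ℝ) ^ n * rr hN g * (x + y)) - ex ((N : ℝ) ^ n * rr hN g * x)
          = ex ((N : ℝ) ^ n * rr hN g * x) * (ex ((N : ℝ) ^ n * rr hN g * y) - 1) := by
        rw [mul_add, ex_add]; ring
      rw [e1, norm_mul, ex_norm, one_mul]
      by_cases c1 : (n0 : ℤ) ≤ n
      · rw [hn0 g hg n c1]; simp; positivity
      by_cases c2 : n ≤ -(L : ℤ)
      · gcongr
        refine (ex_sub_one_le _).trans ?_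
        have h3 : (N : ℝ) ^ n ≤ (N : ℝ)⁻¹ ^ L := by
          rw [inv_pow, ← zpow_natCast, ← zpow_neg]
          exact zpow_le_zpow_right₀ hN1.le c2
        rw [abs_mul, abs_mul, abs_of_pos (show (0:ℝ) < (N : ℝ) ^ n by positivity)]
        rw [lt_div_iff₀ (by positivity)] at hL
        have h4 : (0:ℝ) < (N : ℝ)⁻¹ ^ L := by positivity
        calc 2 * Real.pi * ((N : ℝ) ^ n * |rr hN g| * |y|) ≤ 2 * Real.pi * ((N : ℝ)⁻¹ ^ L * R * |y|) := by
              gcongr; exact hR g hg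
          _ ≤ (N : ℝ)⁻¹ ^ L * (2 * Real.pi * R * |y| + 1) := by nlinarith
          _ ≤ η := hL.le
      · have h5 := hJ g hg
        rw [bt_zero _ v hv (n + jj g) (by push_cast; omega) (by push_cast; omega)]; simp
  have hAη : A * η ≤ 1 / 8 := by
    rw [hη, mul_one_div, div_le_div_iff₀ (by positivity) (by norm_num)]; nlinarith
  have e2 : q (x + y) v - q x v = (q (x + y) - ev (Vr hN (x + y)) a) v - (q x - ev (Vr hN x) a) v
      + (ev (Vr hN (x + y)) a v - ev (Vr hN x) a v) := by
    simp only [sub_apply]; abel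
  have e3 := ContinuousLinearMap.le_of_opNorm_le _ (ha (x + y)) v
  have e4 := ContinuousLinearMap.le_of_opNorm_le _ (ha x) v
  have e5 : A * η * ‖v‖ ≤ 1 / 8 * ‖v‖ := by gcongr
  rw [e2]
  have e6 := norm_add_le ((q (x + y) - ev (Vr hN (x + y)) a) v - (q x - ev (Vr hN x) a) v) (ev (Vr hN (x + y)) a v - ev (Vr hN x) a v)
  have e7 := norm_sub_le ((q (x + y) - ev (Vr hN (x + y)) a) v) ((q x - ev (Vr hN x) a) v)
  linarith

lemma equicont (happ : ∀ ε : ℝ, 0 < ε → ∃ a : BS N →₀ ℂ, ∀ x, ‖q x - ev (Vr hN x) a‖ ≤ ε)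
    {y : ℝ} (hy : ZN N y) (δ : ℝ) (hδ : 0 < δ) : ∃ h0 : ℝ, 0 < h0 ∧ ∀ x h, |h| ≤ h0 → ∀ v,
    ‖(q (x + y) v - q x v) - (q (x + h + y) v - q (x + h) v)‖ ≤ δ * ‖v‖ := by
  obtain ⟨a, ha⟩ := happ (δ / 8) (by positivity)
  obtain ⟨n0, hn0⟩ := ex_eventually hN a.support hy
  obtain ⟨R, hR0, hR⟩ := bound_exists hN a.support
  set A := ∑ g ∈ a.support, ‖a g‖ with hA
  have hA0 : 0 ≤ A := by positivity
  have hN1 : (1 : ℝ) < N := by exact_mod_cast (by omega : 1 < N)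
  have hN0 : (0 : ℝ) < N := by linarith
  set η : ℝ := δ / (2 * (A + 1)) with hη
  have hη0 : 0 < η := by positivity
  refine ⟨η / (4 * Real.pi * (N : ℝ) ^ n0 * R + 1), by positivity, fun x h hh v => ?_⟩
  rw [le_div_iff₀ (by positivity)] at hh
  set D := (ev (Vr hN (x + y)) a v - ev (Vr hN x) a v) - (ev (Vr hN (x + h + y)) a v - ev (Vr hN (x + h)) a v) with hDd
  have hD : ‖D‖ ≤ A * η * ‖v‖ := by
    apply coef_bound (a := a) (fun g n => (ex ((N : ℝ) ^ n * rr hN g * (x + y)) - ex ((N : ℝ) ^ n * rr hN g * x))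
      - (ex ((N : ℝ) ^ n * rr hN g * (x + h + y)) - ex ((N : ℝ) ^ n * rr hN g * (x + h)))) v _ η hη0.le
    · intro n
      rw [hDd, lp.coeFn_sub, Pi.sub_apply, lp.coeFn_sub, Pi.sub_apply, lp.coeFn_sub, Pi.sub_apply,
        evVr_apply, evVr_apply, evVr_apply, evVr_apply, ← Finset.sum_sub_distrib, ← Finset.sum_sub_distrib, ← Finset.sum_sub_distrib]
      apply Finset.sum_congr rfl
      intro g _; ring
    · intro g hg n
      rw [norm_mul]
      have e1 : (ex ((N : ℝ) ^ n * rr hN g * (x + y)) - ex ((N : ℝ) ^ n * rr hN g * x))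
          - (ex ((N : ℝ) ^ n * rr hN g * (x + h + y)) - ex ((N : ℝ) ^ n * rr hN g * (x + h)))
          = - (ex ((N : ℝ) ^ n * rr hN g * x) * (ex ((N : ℝ) ^ n * rr hN g * y) - 1) * (ex ((N : ℝ) ^ n * rr hN g * h) - 1)) := by
        simp only [mul_add, ex_add]; ring
      rw [e1, norm_neg, norm_mul, norm_mul, ex_norm, one_mul]
      by_cases c1 : (n0 : ℤ) ≤ n
      · rw [hn0 g hg n c1]; simp; positivity
      · gcongr
        have h1 : ‖ex ((N : ℝ) ^ n * rr hN g * y) - 1‖ ≤ 2 := by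
          refine (norm_sub_le _ _).trans ?_
          rw [ex_norm]; norm_num
        have h2 := ex_sub_one_le ((N : ℝ) ^ n * rr hN g * h)
        have h3 : (N : ℝ) ^ n ≤ (N : ℝ) ^ n0 := by
          rw [← zpow_natCast]
          exact zpow_le_zpow_right₀ hN1.le (by omega)
        rw [abs_mul, abs_mul, abs_of_pos (show (0:ℝ) < (N : ℝ) ^ n by positivity)] at h2
        have h5 : 2 * Real.pi * ((N : ℝ) ^ n * |rr hN g| * |h|) ≤ 2 * Real.pi * ((N : ℝ) ^ n0 * R * |h|) := by
              gcongr; exact hR g hg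
        calc _ ≤ 2 * (2 * Real.pi * ((N : ℝ) ^ n0 * R * |h|)) := mul_le_mul h1 (h2.trans h5) (norm_nonneg _) (by norm_num)
          _ ≤ |h| * (4 * Real.pi * (N : ℝ) ^ n0 * R + 1) := by nlinarith [abs_nonneg h]
          _ ≤ η := hh
  have hAη : A * η ≤ δ / 2 := by
    rw [hη, mul_div_assoc', div_le_div_iff₀ (by positivity) (by norm_num)]; nlinarith
  have e2 : (q (x + y) v - q x v) - (q (x + h + y) v - q (x + h) v)
      = ((q (x + y) - ev (Vr hN (x + y)) a) v - (q x - ev (Vr hN x) a) v)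
        - ((q (x + h + y) - ev (Vr hN (x + h + y)) a) v - (q (x + h) - ev (Vr hN (x + h)) a) v) + D := by
    rw [hDd]; simp only [sub_apply]; abel
  have e3 := ContinuousLinearMap.le_of_opNorm_le _ (ha (x + y)) v
  have e4 := ContinuousLinearMap.le_of_opNorm_le _ (ha x) v
  have e3' := ContinuousLinearMap.le_of_opNorm_le _ (ha (x + h + y)) v
  have e4' := ContinuousLinearMap.le_of_opNorm_le _ (ha (x + h)) v
  have e5 : A * η * ‖v‖ ≤ δ / 2 * ‖v‖ := by gcongr
  rw [e2]
  refine (norm_add_le _ _).trans ?_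
  have i1 := norm_sub_le ((q (x + y) - ev (Vr hN (x + y)) a) v - (q x - ev (Vr hN x) a) v) ((q (x + h + y) - ev (Vr hN (x + h + y)) a) v - (q (x + h) - ev (Vr hN (x + h)) a) v)
  have i2 := norm_sub_le ((q (x + y) - ev (Vr hN (x + y)) a) v) ((q x - ev (Vr hN x) a) v)
  have i3 := norm_sub_le ((q (x + h + y) - ev (Vr hN (x + h + y)) a) v) ((q (x + h) - ev (Vr hN (x + h)) a) v)
  linarith

lemma finrank_q (happ : ∀ ε : ℝ, 0 < ε → ∃ a : BS N →₀ ℂ, ∀ x, ‖q x - ev (Vr hN x) a‖ ≤ ε)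
    (hpr : ∀ x, IsPr (q x)) (h0 : q 0 = 0) {y : ℝ} (hy : ZN N y) :
    FiniteDimensional ℂ (LinearMap.range (q y : L2 ℤ →ₗ[ℂ] L2 ℤ)) := by
  obtain ⟨W, hW⟩ := window hN happ hy
  have hinj : Function.Injective ((bt W).domRestrict (LinearMap.range (q y : L2 ℤ →ₗ[ℂ] L2 ℤ))) := by
    rw [← LinearMap.ker_eq_bot, LinearMap.ker_eq_bot']
    rintro ⟨v, w, rfl⟩ hv
    have := hW 0 (q y w) hv
    rw [h0, zero_add, (hpr y).idem] at this
    simp only [zero_apply, sub_zero] at this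
    have h2 : ‖q y w‖ = 0 := by linarith [norm_nonneg (q y w)]
    exact Subtype.ext (norm_eq_zero.mp h2)
  exact FiniteDimensional.of_injective _ hinj

theorem q_zero (happ : ∀ ε : ℝ, 0 < ε → ∃ a : BS N →₀ ℂ, ∀ x, ‖q x - ev (Vr hN x) a‖ ≤ ε)
    (hpr : ∀ x, IsPr (q x)) (h0 : q 0 = 0) {y : ℝ} (hy : ZN N y) : q y = 0 := by
  have hf := fun {z : ℝ} (hz : ZN N z) => finrank_q hN happ hpr h0 hz
  have hN1 : (1 : ℝ) < N := by exact_mod_cast (by omega : 1 < N)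
  have hN0 : (0 : ℝ) < N := by linarith
  obtain ⟨W, hW⟩ := window hN happ hy
  obtain ⟨h0', hh0, hh⟩ := equicont hN happ hy (1 / (8 * ((2 * W + 1 : ℕ) : ℝ) + 8)) (by positivity)
  obtain ⟨J, hJ⟩ := exists_pow_lt_of_lt_one (show 0 < h0' / (|y| + 1) by positivity)
    (show ((N : ℝ)⁻¹) < 1 from inv_lt_one_of_one_lt₀ hN1)
  rw [lt_div_iff₀ (by positivity)] at hJ
  set h : ℝ := -y / (N : ℝ) ^ J with hhd
  have hsmall : |h| ≤ h0' := by
    rw [hhd, abs_div, abs_neg, abs_of_pos (show (0:ℝ) < (N : ℝ) ^ J by positivity), div_eq_mul_inv, ← inv_pow]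
    have : (0:ℝ) < (N : ℝ)⁻¹ ^ J := by positivity
    nlinarith
  have hstep : ∀ m : ℕ, (rk (q (m * h + y)) : ℤ) - rk (q (m * h)) = rk (q y) - rk (q 0) := by
    intro m
    induction m with
    | zero => simp
    | succ m ih =>
      rw [← ih]
      have hz : ZN N (m * h) := ZN_mul_div (ZN_neg hy) m J
      have hz' : ZN N (m * h + h) := by
        have := ZN_mul_div (N := N) (ZN_neg hy) (m + 1) J
        push_cast at this
        rwa [add_mul, one_mul] at this
      have := rk_const (hpr (m * h)) (hpr (m * h + y)) (hpr (m * h + h)) (hpr (m * h + h + y))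
        (hf hz) (hf (ZN_add hN hz hy)) (hf hz') (hf (ZN_add hN hz' hy)) (bt W) (hW (m * h)) (hh (m * h) h hsmall)
      rw [this]
      push_cast
      rw [add_mul, one_mul]
  have hfin := hstep (N ^ J)
  have e1 : ((N ^ J : ℕ) : ℝ) * h = -y := by
    rw [hhd]; push_cast; field_simp
  rw [e1, neg_add_cancel, h0] at hfin
  have e2 : rk (0 : L2 ℤ →L[ℂ] L2 ℤ) = 0 := by
    change Module.finrank ℂ (LinearMap.range (0 : L2 ℤ →ₗ[ℂ] L2 ℤ)) = 0
    rw [LinearMap.range_zero, finrank_bot]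
  rw [e2] at hfin
  have e3 : rk (q y) = 0 := by omega
  have := hf hy
  rw [rk, Submodule.finrank_eq_zero, LinearMap.range_eq_bot] at e3
  ext v : 1
  exact LinearMap.congr_fun e3 v

end fam
end BSProof

namespace BSProof

open Topology
open scoped ENNReal

section final

lemma ev_add {G A : Type*} [AddCommGroup A] [Module ℂ A] (f : G → A) (a b : G →₀ ℂ) :
    ev f (a + b) = ev f a + ev f b := by simp [ev]

lemma ev_sub {G A : Type*} [AddCommGroup A] [Module ℂ A] (f : G → A) (a b : G →₀ ℂ) :
    ev f (a - b) = ev f a - ev f b := by simp [ev]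

lemma ev_single {G A : Type*} [AddCommGroup A] [Module ℂ A] (f : G → A) (g : G) (c : ℂ) :
    ev f (Finsupp.single g c) = c • f g := by simp [ev]

theorem transfer {G : Type*} [Group G] {A1 A2 : Type*} [CStarAlgebra A1] [CStarAlgebra A2]
    {f1 : G → A1} {f2 : G → A2} (h1 : IsRep f1) (h2 : IsRep f2)
    (hle : ∀ a : G →₀ ℂ, ‖ev f2 a‖ ≤ ‖ev f1 a‖) (p : A1)
    (hp : p ∈ (StarAlgebra.adjoin ℂ (Set.range f1)).topologicalClosure) (hpp : p * p = p) (hps : star p = p) :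
    ∃ P : A2, P * P = P ∧ star P = P ∧ ∀ a, ‖P - ev f2 a‖ ≤ ‖p - ev f1 a‖ := by
  obtain ⟨F, -, hF⟩ := exists_ext h1 h2 hle
  refine ⟨F ⟨p, hp⟩, ?_, ?_, ?_⟩
  · rw [← map_mul]; congr 1; exact Subtype.ext hpp
  · rw [← map_star]; congr 1; exact Subtype.ext hps
  · intro a
    apply norm_le_of_approx hle
    intro ε hε
    obtain ⟨b, hb1, hb2⟩ := hF ⟨p, hp⟩ ε hε
    refine ⟨b - a, ?_, ?_⟩
    · rw [ev_sub, sub_sub_sub_cancel_right]; exact hb1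
    · rw [ev_sub, sub_sub_sub_cancel_right]; exact hb2

lemma isPr_of {E : Type*} [NormedAddCommGroup E] [InnerProductSpace ℂ E] [CompleteSpace E] {P : E →L[ℂ] E}
    (h : P * P = P) (hs : star P = P) : IsPr P := by
  constructor
  · intro v
    conv_rhs => rw [← h]
    rfl
  · intro v w
    rw [← ContinuousLinearMap.adjoint_inner_right, ← ContinuousLinearMap.star_eq_adjoint, hs]

lemma mem_cl_approx {G : Type*} [Group G] {A1 : Type*} [CStarAlgebra A1]
    {f1 : G → A1} (h1 : IsRep f1) (p : A1)
    (hp : p ∈ (StarAlgebra.adjoin ℂ (Set.range f1)).topologicalClosure) (ε : ℝ) (hε : 0 < ε) :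
    ∃ a, ‖p - ev f1 a‖ ≤ ε := by
  obtain ⟨F, -, hF⟩ := exists_ext h1 h1 (fun a => le_rfl)
  obtain ⟨b, hb1, hb2⟩ := hF ⟨p, hp⟩ ε hε
  exact ⟨b, hb1.le⟩

/-- characters -/
noncomputable def ch {N : ℕ} (θ : ℝ) (g : BS N) : ℂ := ex (jj g * θ)

lemma ex_conj (θ : ℝ) : star (ex θ) = ex (-θ) := by
  have h : ex θ * ex (-θ) = 1 := by rw [← ex_add, add_neg_cancel, ex_zero]
  have h2 : star (ex θ) * ex θ = 1 := by
    rw [Complex.star_def, Complex.conj_mul', ex_norm]; norm_num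
  calc star (ex θ) = star (ex θ) * (ex θ * ex (-θ)) := by rw [h, mul_one]
    _ = _ := by rw [← mul_assoc, h2, one_mul]

lemma ch_rep {N : ℕ} (θ : ℝ) : IsRep (ch (N := N) θ) := by
  refine ⟨by simp [ch, jj_one, ex_zero], fun g h => ?_, fun g => ?_⟩
  · rw [ch, jj_mul, ch, ch, ← ex_add]; congr 1; push_cast; ring
  · rw [ch, ch, ex_conj, jj_inv]; congr 1; push_cast; ring

lemma ch_le {N : ℕ} (θ : ℝ) (a : BS N →₀ ℂ) : ∃ σ : BS N → ℂ →L[ℂ] ℂ, IsRep σ ∧ ‖ev (ch θ) a‖ ≤ ‖ev σ a‖ := by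
  refine ⟨fun g => algebraMap ℂ _ (ch θ g), ⟨?_, ?_, ?_⟩, ?_⟩
  · rw [(ch_rep θ).one, map_one]
  · intro g h; rw [(ch_rep θ).mul, map_mul]
  · intro g; rw [← (ch_rep θ).star, algebraMap_star_comm]
  · have : ev (ch θ) a = ev (fun g : BS N => (algebraMap ℂ (ℂ →L[ℂ] ℂ) (ch θ g))) a 1 := by
      rw [ev_apply, ev_eq]
      apply Finset.sum_congr rfl
      intro g _
      simp [Algebra.algebraMap_eq_smul_one]
    rw [this]
    refine (ContinuousLinearMap.le_opNorm _ _).trans ?_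
    simp

lemma ex_zpow (θ : ℝ) (n : ℤ) : ex (n * θ) = ex θ ^ n := by
  rw [ex, ex, ← Complex.exp_int_mul]; congr 1; push_cast; ring

lemma ex_surj {z : ℂ} (hz : ‖z‖ = 1) : ∃ θ, z = ex θ := by
  refine ⟨Complex.arg z / (2 * Real.pi), ?_⟩
  rw [ex, mul_div_cancel₀ _ (by positivity)]
  have := Complex.norm_mul_exp_arg_mul_I z
  rw [hz] at this
  simpa using this.symm

lemma cfc_bound {G A : Type*} [CStarAlgebra A] [Nontrivial A] (S : Finset G) (c : G → ℂ) (d : G → ℤ) (U : Aˣ)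
    (hU : (U : A) ∈ unitary A) (s : ℂ) (ε : ℝ) (hε : 0 ≤ ε)
    (h : ∀ θ : ℝ, ‖∑ g ∈ S, c g * ex (d g * θ) - s‖ ≤ ε) :
    ‖∑ g ∈ S, c g • ((U ^ d g : Aˣ) : A) - s • 1‖ ≤ ε := by
  have hn : IsStarNormal (U : A) := ⟨by
    rw [Commute, SemiconjBy, (Unitary.mem_iff.mp hU).1, (Unitary.mem_iff.mp hU).2]⟩
  have hsp : ∀ z ∈ spectrum ℂ (U : A), ‖z‖ = 1 := by
    intro z hz
    simpa using spectrum.subset_circle_of_unitary hU hz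
  have hcont : ∀ n : ℤ, ContinuousOn (fun z : ℂ => z ^ n) (spectrum ℂ (U : A)) := by
    intro n z hz
    apply ContinuousAt.continuousWithinAt
    apply continuousAt_zpow₀
    left; rintro rfl; simpa using hsp 0 hz
  have hc2 : ∀ g, ContinuousOn (fun z : ℂ => c g * z ^ d g) (spectrum ℂ (U : A)) := fun g =>
    continuousOn_const.mul (hcont _)
  have key : cfc (fun z : ℂ => (∑ g ∈ S, fun z : ℂ => c g * z ^ d g) z - s) (U : A) =
      ∑ g ∈ S, c g • ((U ^ d g : Aˣ) : A) - s • 1 := by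
    have hsum : ContinuousOn (∑ g ∈ S, fun z : ℂ => c g * z ^ d g) (spectrum ℂ (U : A)) := by
      have : (∑ g ∈ S, fun z : ℂ => c g * z ^ d g) = fun z => ∑ g ∈ S, c g * z ^ d g := by ext; simp
      rw [this]
      exact continuousOn_finsetSum _ fun g _ => hc2 g
    rw [cfc_sub _ _ _ hsum continuousOn_const, cfc_sum _ _ _ (fun g _ => hc2 g), cfc_const s _ hn, Algebra.algebraMap_eq_smul_one]
    congr 1
    apply Finset.sum_congr rfl
    intro g _
    rw [cfc_const_mul _ _ _ (hcont _), cfc_zpow U _ hn]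
  rw [← key]
  apply norm_cfc_le hε
  intro z hz
  obtain ⟨θ, rfl⟩ := ex_surj (hsp z hz)
  have e : (∑ g ∈ S, fun z : ℂ => c g * z ^ d g) (ex θ) = ∑ g ∈ S, c g * ex (d g * θ) := by
    rw [Finset.sum_apply]
    apply Finset.sum_congr rfl
    intro g _
    rw [ex_zpow]
  rw [e]
  exact h θ

variable {N : ℕ} (hN : 2 ≤ N)

lemma nontrivial_op : Nontrivial (L2 ℤ →L[ℂ] L2 ℤ) := by
  refine ⟨⟨0, 1, fun h => ?_⟩⟩
  have : (0 : L2 ℤ →L[ℂ] L2 ℤ) (dl ℤ 0) = (1 : L2 ℤ →L[ℂ] L2 ℤ) (dl ℤ 0) := by rw [h]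
  have h2 := congrArg norm this
  simp [dl_norm] at h2

lemma V0_bound (a : BS N →₀ ℂ) (s : ℂ) (ε : ℝ) (hε : 0 ≤ ε) (h : ∀ θ, ‖ev (ch θ) a - s‖ ≤ ε) :
    ‖ev (Vr hN 0) a - s • 1‖ ≤ ε := by
  have hr := Vr_rep hN 0
  let φ : BS N →* (L2 ℤ →L[ℂ] L2 ℤ)ˣ :=
    { toFun := fun g => ⟨Vr hN 0 g, Vr hN 0 g⁻¹, by rw [← hr.mul, mul_inv_cancel, hr.one],
        by rw [← hr.mul, inv_mul_cancel, hr.one]⟩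
      map_one' := Units.ext hr.one
      map_mul' := fun g h => Units.ext (hr.mul g h) }
  have hφ : ∀ g, ((φ (BS.u N) ^ jj g : (L2 ℤ →L[ℂ] L2 ℤ)ˣ) : L2 ℤ →L[ℂ] L2 ℤ) = Vr hN 0 g := by
    intro g
    rw [← map_zpow]
    change Vr hN 0 _ = _
    ext f n
    rw [Vr_apply, Vr_apply, jj_zpow, jj_u]; simp
  have hu : ((φ (BS.u N) : (L2 ℤ →L[ℂ] L2 ℤ)ˣ) : L2 ℤ →L[ℂ] L2 ℤ) ∈ unitary (L2 ℤ →L[ℂ] L2 ℤ) := by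
    change Vr hN 0 _ ∈ _
    rw [Unitary.mem_iff, hr.star, ← hr.mul, ← hr.mul, mul_inv_cancel, inv_mul_cancel, hr.one]
    exact ⟨rfl, rfl⟩
  have := nontrivial_op
  have := cfc_bound a.support a jj (φ (BS.u N)) hu s ε hε (by
    intro θ
    have := h θ
    rw [ev_eq] at this
    exact this)
  rw [ev_eq]
  simpa only [hφ] using this

end final
end BSProof

namespace BSProof

open Topology
open scoped ENNReal

section final2

variable {N : ℕ} (hN : 2 ≤ N)

lemma ex_cont : Continuous ex := by unfold ex; fun_prop

theorem dich {A : Type*} [CStarAlgebra A] {f : BS N → A} (hf : IsRep f)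
    (hch : ∀ θ a, ‖ev (ch θ) a‖ ≤ ‖ev f a‖) (p : A)
    (hp : p ∈ (StarAlgebra.adjoin ℂ (Set.range f)).topologicalClosure) (hpp : p * p = p) (hps : star p = p) :
    (∀ ε : ℝ, 0 < ε → ∃ a, ‖p - ev f a‖ ≤ ε ∧ ‖ev (Vr hN 0) a‖ ≤ ε) ∨
    (∀ ε : ℝ, 0 < ε → ∃ a, ‖(1 - p) - ev f a‖ ≤ ε ∧ ‖ev (Vr hN 0) a‖ ≤ ε) := by
  have ht : ∀ θ : ℝ, ∃ s : ℂ, s * s = s ∧ ∀ a, ‖s - ev (ch θ) a‖ ≤ ‖p - ev f a‖ := by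
    intro θ
    obtain ⟨s, h1, -, h3⟩ := transfer hf (ch_rep θ) (hch θ) p hp hpp hps
    exact ⟨s, h1, h3⟩
  choose s hs1 hs2 using ht
  have h01 : ∀ θ, s θ = 0 ∨ s θ = 1 := by
    intro θ
    have : s θ * (s θ - 1) = 0 := by rw [mul_sub, hs1]; ring
    rcases mul_eq_zero.mp this with h | h
    · exact Or.inl h
    · exact Or.inr (sub_eq_zero.mp h)
  have hloc : IsLocallyConstant s := by
    rw [IsLocallyConstant.iff_eventually_eq]
    intro θ
    obtain ⟨a, ha⟩ := mem_cl_approx hf p hp (1 / 4) (by norm_num)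
    have hc : Continuous (fun η => ev (ch (N := N) η) a) := by
      simp only [ev_eq, ch]
      apply continuous_finsetSum
      intro g _
      have h : Continuous (fun η : ℝ => ex ((jj g : ℝ) * η)) := ex_cont.comp (continuous_const.mul continuous_id)
      exact h.const_smul (a g)
    filter_upwards [Metric.tendsto_nhds.mp (hc.tendsto θ) (1 / 4) (by norm_num)] with η hη
    rw [dist_eq_norm] at hη
    have b1 := (hs2 θ a).trans ha
    have b2 := (hs2 η a).trans ha
    have : ‖s η - s θ‖ < 1 := by
      have e : s η - s θ = (s η - ev (ch η) a) + (ev (ch η) a - ev (ch θ) a) - (s θ - ev (ch θ) a) := by ring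
      rw [e]
      refine (norm_sub_le _ _).trans_lt ?_
      have := norm_add_le (s η - ev (ch η) a) (ev (ch η) a - ev (ch θ) a)
      linarith
    rcases h01 θ with h | h <;> rcases h01 η with h' | h' <;> rw [h, h'] at this ⊢ <;> norm_num at this
  have hconst : ∀ θ, s θ = s 0 := fun θ => hloc.apply_eq_of_preconnectedSpace θ 0
  have hb : ∀ ε : ℝ, 0 < ε → ∃ a, ‖p - ev f a‖ ≤ ε ∧ ‖ev (Vr hN 0) a - s 0 • 1‖ ≤ ε := by
    intro ε hε
    obtain ⟨a, ha⟩ := mem_cl_approx hf p hp ε hε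
    refine ⟨a, ha, V0_bound hN a (s 0) ε hε.le fun θ => ?_⟩
    rw [← hconst θ, norm_sub_rev]
    exact (hs2 θ a).trans ha
  rcases h01 0 with h | h
  · left
    simpa [h] using hb
  · right
    intro ε hε
    obtain ⟨a, h1, h2⟩ := hb ε hε
    rw [h, one_smul] at h2
    refine ⟨Finsupp.single 1 1 - a, ?_, ?_⟩
    · rw [ev_sub, ev_single, hf.one, one_smul, sub_sub_sub_cancel_left, norm_sub_rev]; exact h1
    · rw [ev_sub, ev_single, (Vr_rep hN 0).one, one_smul, norm_sub_rev]; exact h2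

/-- geometric sum -/
lemma geom_zero (Q : ℕ) (hQ : 0 < Q) (k : ℤ) (hk : k ≠ 0) (hk2 : |k| < Q) :
    ∑ s ∈ Finset.range Q, ex (s * (k / Q)) = 0 := by
  have hQ0 : (Q : ℝ) ≠ 0 := by positivity
  simp only [ex_nsmul]
  have h1 : ex (k / Q) ≠ 1 := by
    intro h
    obtain ⟨m, hm⟩ := ex_eq_one h
    have h2 : k = m * Q := by
      rw [div_eq_iff hQ0] at hm
      exact_mod_cast hm
    have h3 : (Q : ℤ) ∣ k := ⟨m, by rw [h2]; ring⟩
    exact hk (Int.eq_zero_of_abs_lt_dvd h3 hk2)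
  rw [geom_sum_eq h1, ← ex_nsmul, mul_div_cancel₀ _ hQ0, ex_int]; simp

theorem averaging (a : BS N →₀ ℂ) (ε : ℝ) (h : ∀ y, ZN N y → ‖ev (Vr hN y) a‖ ≤ ε) : ‖a 1‖ ≤ ε := by
  classical
  have hN0 : (N : ℝ) ≠ 0 := by positivity
  obtain ⟨M, hM⟩ := rr_ZN hN a.support
  choose! k hk using hM
  obtain ⟨R, hR⟩ : ∃ R : ℕ, ∀ g ∈ a.support, |k g| < N ^ R := by
    refine ⟨a.support.sup (fun g => (k g).natAbs), fun g hg => ?_⟩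
    have h1 : (k g).natAbs ≤ a.support.sup (fun g => (k g).natAbs) := Finset.le_sup (f := fun g => (k g).natAbs) hg
    have h2 := Nat.lt_pow_self (n := a.support.sup (fun g => (k g).natAbs)) (show 1 < N by omega)
    have h3 := h1.trans_lt h2
    rw [Int.abs_eq_natAbs]
    exact_mod_cast h3
  set Q := N ^ R with hQ
  have hQpos : 0 < Q := by positivity
  set c : ℝ → ℂ := fun y => (ev (Vr hN y) a (dl ℤ 0) : ∀ _ : ℤ, ℂ) 0 with hc
  have hcb : ∀ y, ZN N y → ‖c y‖ ≤ ε := by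
    intro y hy
    rw [hc]
    simp only
    rw [← inner_dl]
    refine (norm_inner_le_norm _ _).trans ?_
    rw [dl_norm, one_mul]
    refine (ContinuousLinearMap.le_opNorm _ _).trans ?_
    rw [dl_norm, mul_one]; exact h y hy
  have hce : ∀ y, c y = ∑ g ∈ a.support, a g * (ex (rr hN g * y) * if jj g = 0 then 1 else 0) := by
    intro y
    rw [hc]
    simp only
    rw [evVr_apply]
    simp [dl_apply]
  have hsum : ∑ s ∈ Finset.range Q, c (s * (N ^ M / Q)) = Q * a 1 := by
    simp only [hce]
    rw [Finset.sum_comm]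
    have : ∀ g ∈ a.support, ∑ s ∈ Finset.range Q, a g * (ex (rr hN g * (s * (N ^ M / Q))) * if jj g = 0 then 1 else 0)
        = if g = 1 then Q * a 1 else 0 := by
      intro g hg
      rw [← Finset.mul_sum, ← Finset.sum_mul]
      have e : ∀ s : ℕ, rr hN g * (s * ((N : ℝ) ^ M / Q)) = s * (k g / Q) := by
        intro s; rw [hk g hg]; field_simp
      simp only [e]
      by_cases h1 : g = 1
      · subst h1
        have : k 1 = 0 := by
          have := hk 1 hg
          rw [rr_one] at this
          have h2 : (k 1 : ℝ) = 0 := by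
            rcases div_eq_zero_iff.mp this.symm with h | h
            · exact h
            · exact absurd h (by positivity)
          exact_mod_cast h2
        simp [this, jj_one, ex_zero, mul_comm]
      · rw [if_neg h1]
        by_cases hj : jj g = 0
        · have : k g ≠ 0 := by
            intro h0
            apply h1
            apply rr_jj_injective hN
            · rw [hk g hg, h0, rr_one]; simp
            · rw [hj, jj_one]
          rw [geom_zero Q hQpos _ this (by rw [hQ]; exact_mod_cast hR g hg)]; simp
        · simp [hj]
    rw [Finset.sum_congr rfl this, Finset.sum_ite_eq']
    split_ifs with h1
    · rfl
    · rw [Finsupp.notMem_support_iff.mp h1, mul_zero]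
  have hle : ‖(Q : ℂ) * a 1‖ ≤ Q * ε := by
    rw [← hsum]
    refine (norm_sum_le _ _).trans ?_
    refine (Finset.sum_le_card_nsmul _ _ ε ?_).trans ?_
    · intro s _
      apply hcb
      exact ⟨s * N ^ M, R, by rw [hQ]; push_cast; ring⟩
    · simp
  rw [norm_mul, Complex.norm_natCast] at hle
  exact le_of_mul_le_mul_left hle (by exact_mod_cast hQpos)

theorem proj_zero {A : Type*} [CStarAlgebra A] {f : BS N → A} (hf : IsRep f)
    (ρ : BS N → L2 (BS N) →L[ℂ] L2 (BS N)) (hρ : ∀ g f x, (ρ g f : ∀ _ : BS N, ℂ) x = (f : ∀ _ : BS N, ℂ) (x * g))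
    (hρr : IsRep ρ)
    (hV : ∀ x a, ‖ev (Vr hN x) a‖ ≤ ‖ev f a‖) (h1 : ∀ a, ‖ev ρ a‖ ≤ ‖ev f a‖) (h2 : ∀ a, ‖ev f a‖ ≤ ‖ev ρ a‖)
    (p : A)
    (hp : p ∈ (StarAlgebra.adjoin ℂ (Set.range f)).topologicalClosure) (hpp : p * p = p) (hps : star p = p)
    (hap : ∀ ε : ℝ, 0 < ε → ∃ a, ‖p - ev f a‖ ≤ ε ∧ ‖ev (Vr hN 0) a‖ ≤ ε) : p = 0 := by
  have ht := fun x => transfer hf (Vr_rep hN x) (hV x) p hp hpp hps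
  choose q hq1 hq2 hq3 using ht
  have hq0 : q 0 = 0 := by
    rw [← norm_le_zero_iff]
    apply le_of_forall_pos_le_add
    intro ε hε
    obtain ⟨a, ha1, ha2⟩ := hap (ε / 2) (by linarith)
    have := hq3 0 a
    have := norm_sub_norm_le (q 0) (ev (Vr hN 0) a)
    linarith
  have hqz : ∀ y, ZN N y → q y = 0 := fun y hy => q_zero hN (q := q) (fun ε hε => by
    obtain ⟨a, ha, -⟩ := hap ε hε
    exact ⟨a, fun x => (hq3 x a).trans ha⟩) (fun x => isPr_of (hq1 x) (hq2 x)) hq0 hy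
  obtain ⟨P, hP1, hP2, hP3⟩ := transfer hf hρr h1 p hp hpp hps
  have hPr := isPr_of hP1 hP2
  have hdiag : ∀ x, inner ℂ (dl (BS N) x) (P (dl (BS N) x)) = 0 := by
    intro x
    rw [← norm_le_zero_iff]
    apply le_of_forall_pos_le_add
    intro ε hε
    obtain ⟨a, ha, -⟩ := hap (ε / 2) (by linarith)
    have h1 : ‖a 1‖ ≤ ε / 2 := by
      apply averaging hN
      intro y hy
      have := hq3 y a
      rw [hqz y hy, zero_sub, norm_neg] at this
      exact this.trans ha
    have h2 : inner ℂ (dl (BS N) x) (ev ρ a (dl (BS N) x)) = a 1 := by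
      classical
      rw [inner_dl, ev_apply, lp.coeFn_sum, Finset.sum_apply]
      have : ∀ g ∈ a.support, (((a g • ρ g (dl (BS N) x) : L2 (BS N))) : ∀ _ : BS N, ℂ) x = if g = 1 then a 1 else 0 := by
        intro g _
        rw [lp.coeFn_smul, Pi.smul_apply, hρ, dl_apply]
        by_cases hg : g = 1 <;> simp [hg]
      rw [Finset.sum_congr rfl this, Finset.sum_ite_eq']
      split_ifs with h1
      · rfl
      · rw [Finsupp.notMem_support_iff.mp h1]
    have h3 : ‖inner ℂ (dl (BS N) x) ((P - ev ρ a) (dl (BS N) x))‖ ≤ ε / 2 := by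
      refine (norm_inner_le_norm _ _).trans ?_
      rw [dl_norm, one_mul]
      refine (ContinuousLinearMap.le_opNorm _ _).trans ?_
      rw [dl_norm, mul_one]; exact (hP3 a).trans ha
    rw [sub_apply, inner_sub_right, h2] at h3
    have := norm_sub_norm_le (inner ℂ (dl (BS N) x) (P (dl (BS N) x))) (a 1)
    linarith
  have hPd : ∀ x, P (dl (BS N) x) = 0 := by
    intro x
    rw [← inner_self_eq_zero (𝕜 := ℂ), hPr.symm, hPr.idem]
    exact hdiag x
  have hP0 : P = 0 := by
    rw [← norm_le_zero_iff]
    apply opNorm_le_of_ev _ _ le_rfl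
    intro b
    rw [ev_eq, map_sum]
    simp [hPd]
  rw [← norm_le_zero_iff]
  apply le_of_forall_pos_le_add
  intro ε hε
  obtain ⟨a, ha, -⟩ := hap (ε / 2) (by linarith)
  have b1 := hP3 a
  rw [hP0, zero_sub, norm_neg] at b1
  have b2 := h2 a
  have := norm_sub_norm_le p (ev f a)
  linarith

end final2
end BSProof

namespace BSProof

open Topology
open scoped ENNReal

section final3

variable {N : ℕ}

lemma exists_ext_inj {G : Type*} [Group G] {A1 A2 : Type*} [CStarAlgebra A1] [CStarAlgebra A2]
    {f1 : G → A1} {f2 : G → A2} (h1 : IsRep f1) (h2 : IsRep f2)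
    (hle : ∀ a : G →₀ ℂ, ‖ev f2 a‖ ≤ ‖ev f1 a‖) (hle' : ∀ a : G →₀ ℂ, ‖ev f1 a‖ ≤ ‖ev f2 a‖) :
    ∃ F : (StarAlgebra.adjoin ℂ (Set.range f1)).topologicalClosure →⋆ₐ[ℂ] A2, Function.Injective F ∧
      (∀ (g : G) (hg : f1 g ∈ (StarAlgebra.adjoin ℂ (Set.range f1)).topologicalClosure),
        F ⟨f1 g, hg⟩ = f2 g) := by
  obtain ⟨F, hF1, hF2⟩ := exists_ext h1 h2 hle
  refine ⟨F, ?_, hF1⟩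
  rw [injective_iff_map_eq_zero]
  intro x hx
  have h3 : ‖(x : A1)‖ ≤ ‖F x‖ :=
    norm_le_of_approx hle' (fun ε hε => by
      obtain ⟨a, ha1, ha2⟩ := hF2 x ε hε
      exact ⟨a, ha2, ha1⟩)
  rw [hx, norm_zero, norm_le_zero_iff] at h3
  exact Subtype.ext h3

theorem conn (hN : 2 ≤ N) {A : Type*} [CStarAlgebra A] [Nontrivial A] {f : BS N → A} (hf : IsRep f)
    (ρ : BS N → L2 (BS N) →L[ℂ] L2 (BS N)) (hρ : ∀ g f x, (ρ g f : ∀ _ : BS N, ℂ) x = (f : ∀ _ : BS N, ℂ) (x * g))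
    (hρr : IsRep ρ)
    (h1 : ∀ a, ‖ev ρ a‖ ≤ ‖ev f a‖) (h2 : ∀ a, ‖ev f a‖ ≤ ‖ev ρ a‖)
    (a : A) (ha : a ∈ (StarAlgebra.adjoin ℂ (Set.range f)).topologicalClosure) : IsConnected (spectrum ℂ a) := by
  have hfol := folner hN
  have hV : ∀ x a, ‖ev (Vr hN x) a‖ ≤ ‖ev f a‖ := fun x a =>
    (le_rho _ hρ hfol _ (Vr_rep hN x) a).trans (h1 a)
  have hch : ∀ θ a, ‖ev (ch θ) a‖ ≤ ‖ev f a‖ := by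
    intro θ a
    obtain ⟨σ, hσ, hle⟩ := ch_le θ a
    exact hle.trans ((le_rho _ hρ hfol σ hσ a).trans (h1 a))
  refine connected_of_proj _ (StarSubalgebra.isClosed_topologicalClosure _) ?_ a ha
  intro e he hee hes
  rcases dich hN hf hch e he hee hes with h | h
  · left
    exact proj_zero hN hf _ hρ hρr hV h1 h2 e he hee hes h
  · right
    have := proj_zero hN hf _ hρ hρr hV h1 h2 (1 - e) (sub_mem (one_mem _) he)
      (by rw [mul_sub, mul_one, sub_mul, one_mul, hee, sub_self, sub_zero]) (by rw [star_sub, star_one, hes]) h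
    exact (sub_eq_zero.mp this).symm

lemma wavelet_vec {H : Type*} [NormedAddCommGroup H] [InnerProductSpace ℂ H] [CompleteSpace H]
    (pRep : BS N →* unitary (H →L[ℂ] H)) (p : ℕ) (hp : 0 < p) (ψ : Fin p → H)
    (hon : Orthonormal ℂ (fun jki : ℤ × ℤ × Fin p =>
      ((pRep (BS.u N ^ jki.1 * BS.t N ^ jki.2.1) : H →L[ℂ] H)) (ψ jki.2.2))) (S : Finset (BS N)) :
    ∃ v : H, (∀ x ∈ S, ∀ y ∈ S, x ≠ y → inner ℂ ((pRep x : H →L[ℂ] H) v) ((pRep y : H →L[ℂ] H) v) = 0) ∧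
      ∀ x ∈ S, ‖(pRep x : H →L[ℂ] H) v‖ = 1 := by
  obtain ⟨n, hn⟩ := conj_form S
  choose! j k hjk using hn
  set w := BS.u N ^ n with hw
  have hmul : ∀ g h : BS N, ∀ v, (pRep (g * h) : H →L[ℂ] H) v = (pRep g : H →L[ℂ] H) ((pRep h : H →L[ℂ] H) v) := by
    intro g h v; rw [map_mul]; rfl
  have hin : ∀ (g : BS N) (v v' : H), inner ℂ ((pRep g : H →L[ℂ] H) v) ((pRep g : H →L[ℂ] H) v') = inner ℂ v v' := by
    intro g v v'
    rw [← ContinuousLinearMap.adjoint_inner_right, ← ContinuousLinearMap.star_eq_adjoint, ← mul_apply_eq_comp,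
      Unitary.coe_star_mul_self]; rfl
  have hv : ∀ g ∈ S, (pRep g : H →L[ℂ] H) ((pRep w⁻¹ : H →L[ℂ] H) (ψ ⟨0, hp⟩)) =
      (pRep w⁻¹ : H →L[ℂ] H) ((pRep (BS.u N ^ (j g) * BS.t N ^ (k g)) : H →L[ℂ] H) (ψ ⟨0, hp⟩)) := by
    intro g hg
    rw [← hmul, ← hmul, ← hjk g hg]
    congr 3; group
  have hnn : ∀ (g : BS N) (v : H), ‖(pRep g : H →L[ℂ] H) v‖ = ‖v‖ := by
    intro g v
    rw [norm_eq_sqrt_re_inner (𝕜 := ℂ), hin, ← norm_eq_sqrt_re_inner (𝕜 := ℂ)]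
  refine ⟨(pRep w⁻¹ : H →L[ℂ] H) (ψ ⟨0, hp⟩), ?_, ?_⟩
  · intro x hx y hy hxy
    rw [hv x hx, hv y hy, hin]
    have hne : ((j x, k x, (⟨0, hp⟩ : Fin p)) : ℤ × ℤ × Fin p) ≠ (j y, k y, ⟨0, hp⟩) := by
      intro h
      simp only [Prod.mk.injEq, and_true] at h
      apply hxy
      have e := (hjk x hx).trans ((by rw [h.1, h.2] : _ = _).trans (hjk y hy).symm)
      simpa using e
    exact hon.2 hne
  · intro x hx
    rw [hv x hx, hnn]
    exact hon.1 (j x, k x, ⟨0, hp⟩)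

end final3
end BSProof

open MeasureTheory Real Complex Filter Finset in
/-- Theorem 2.1. Let `π` be a unitary representation of
`BS(1,N)` admitting a wavelet `{ψ_1, …, ψ_p}` (i.e. the family
`π(u^j t^k) ψ_i` is an orthonormal basis).  Then `π` is weakly equivalent to the
right regular representation `ρ` of `BS(1,N)` — formalized by the equality of
the C*-norms `‖π(a)‖ = ‖ρ(a)‖` for every element `a` of the group algebra — so
`π` extends to a faithful representation of the reduced C*-algebra
`C*_r(BS(1,N))` (the C*-algebra generated by the right regular representation);
moreover every element of the C*-algebra generated by `π(BS(1,N))` has a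
connected spectrum. -/
theorem statement_1 (N : ℕ) (hN : 2 ≤ N)
    {H : Type} [NormedAddCommGroup H] [InnerProductSpace ℂ H] [CompleteSpace H]
    (pRep : BS N →* unitary (H →L[ℂ] H))
    -- `{ψ_1, …, ψ_p}` is a wavelet for `π`:
    (p : ℕ) (hp : 0 < p) (ψ : Fin p → H)
    (hon : Orthonormal ℂ (fun jki : ℤ × ℤ × Fin p =>
      ((pRep (BS.u N ^ jki.1 * BS.t N ^ jki.2.1) : H →L[ℂ] H)) (ψ jki.2.2)))
    (hdense : (Submodule.span ℂ (Set.range (fun jki : ℤ × ℤ × Fin p =>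
        ((pRep (BS.u N ^ jki.1 * BS.t N ^ jki.2.1) : H →L[ℂ] H)) (ψ jki.2.2)))).topologicalClosure
      = ⊤)
    -- `ρ` is the right regular representation of `BS(1,N)` on `ℓ²(BS(1,N))`:
    (ρ : BS N →* unitary
      (lp (fun _ : BS N => ℂ) 2 →L[ℂ] lp (fun _ : BS N => ℂ) 2))
    (hρ : ∀ (g : BS N) (f : lp (fun _ : BS N => ℂ) 2) (x : BS N),
      (((ρ g : lp (fun _ : BS N => ℂ) 2 →L[ℂ] lp (fun _ : BS N => ℂ) 2) f :
        lp (fun _ : BS N => ℂ) 2) : ∀ _ : BS N, ℂ) x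
        = (f : ∀ _ : BS N, ℂ) (x * g)) :
    -- weak equivalence of `π` and `ρ`: equality of C*-norms on the group algebra
    (∀ a : BS N →₀ ℂ,
      ‖∑ g ∈ a.support, a g • ((pRep g : H →L[ℂ] H))‖
        = ‖∑ g ∈ a.support, a g •
            ((ρ g : lp (fun _ : BS N => ℂ) 2 →L[ℂ] lp (fun _ : BS N => ℂ) 2))‖) ∧
    -- `π` extends to a faithful (injective) representation of `C*_r(BS(1,N))`,
    -- the C*-algebra generated by the right regular representation
    (∃ F : (StarAlgebra.adjoin ℂ (Set.range (fun g : BS N =>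
          ((ρ g : lp (fun _ : BS N => ℂ) 2 →L[ℂ] lp (fun _ : BS N => ℂ) 2))))).topologicalClosure
        →⋆ₐ[ℂ] (H →L[ℂ] H),
      Function.Injective F ∧
      ∀ g : BS N,
        F ⟨(ρ g : lp (fun _ : BS N => ℂ) 2 →L[ℂ] lp (fun _ : BS N => ℂ) 2),
            (StarSubalgebra.le_topologicalClosure _)
              (StarAlgebra.subset_adjoin ℂ _ ⟨g, rfl⟩)⟩
          = (pRep g : H →L[ℂ] H)) ∧
    -- every element of the C*-algebra generated by `π(BS(1,N))` has connected
    -- spectrum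
    (∀ a : H →L[ℂ] H,
      a ∈ (StarAlgebra.adjoin ℂ (Set.range (fun g : BS N =>
          ((pRep g : H →L[ℂ] H))))).topologicalClosure →
      IsConnected (spectrum ℂ a)) := by
  have hπ := BSProof.isRep_of_hom pRep
  have hρr := BSProof.isRep_of_hom ρ
  have hfol := BSProof.folner hN
  have h1 : ∀ a, ‖BSProof.ev (fun g => (ρ g : lp (fun _ : BS N => ℂ) 2 →L[ℂ] lp (fun _ : BS N => ℂ) 2)) a‖ ≤
      ‖BSProof.ev (fun g => (pRep g : H →L[ℂ] H)) a‖ := fun a =>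
    BSProof.rho_le _ hρ _ hπ (fun S => BSProof.wavelet_vec pRep p hp ψ hon S) a
  have h2 : ∀ a, ‖BSProof.ev (fun g => (pRep g : H →L[ℂ] H)) a‖ ≤
      ‖BSProof.ev (fun g => (ρ g : lp (fun _ : BS N => ℂ) 2 →L[ℂ] lp (fun _ : BS N => ℂ) 2)) a‖ := fun a =>
    BSProof.le_rho _ hρ hfol _ hπ a
  refine ⟨?_, ?_, ?_⟩
  · intro a
    rw [← BSProof.ev_eq, ← BSProof.ev_eq]
    exact le_antisymm (h2 a) (h1 a)
  · obtain ⟨F, hF1, hF2⟩ := BSProof.exists_ext_inj hρr hπ h2 h1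
    exact ⟨F, hF1, fun g => hF2 g _⟩
  · intro a ha
    have hnt : Nontrivial (H →L[ℂ] H) := by
      refine ⟨⟨0, 1, fun h => ?_⟩⟩
      have hz : ∀ v : H, v = 0 := fun v => by
        have := congrArg (fun T : H →L[ℂ] H => T v) h
        simpa using this.symm
      have h4 := hon.1 (0, 0, ⟨0, hp⟩)
      beta_reduce at h4
      rw [hz ((pRep _ : H →L[ℂ] H) _), norm_zero] at h4
      exact zero_ne_one h4
    exact BSProof.conn hN hπ _ hρ hρr h1 h2 a ha
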